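/- Let K be a number field which is neither ℚ nor an imaginary quadratic field (equivalently, K has at least two archimedean places), with ring of integers O_K, and let k ≥ 1 be an integer. Then the subgroup of SL_2(O_K) generated by the matrices (1, b; 0, 1) and (1, 0; c, 1), where b and c range over the ideal kO_K, has finite index in SL_2(O_K). -/

import Mathlib

open NumberField

open scoped MatrixGroups

/-!
Write `R = 𝓞 K` and `d = [K : ℚ]`, let `E k = elementary (k : R)` be the group generated by the
unipotent matrices of level `k`, and `L k = principal (k : R)` the principal congruence subgroup.
Since `E k` decreases when `k` is replaced by a multiple, `k` may be assumed even. The group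
`L (k²)` normalizes `E k`, and `A = L (k²) / (E k ∩ L (k²))` is a finite abelian group.

*Two topologies.* As `K` has two archimedean places, `R` has a unit of infinite order. Conjugating
by diagonal matrices of units, and interpolating `1` by the functions `1 / (η + n)`, one finds that
for each `s ∈ SL₂(K)` and each `k` some `E k'` is conjugated by `s` into `E k`
(`conjContinuous_elementaryIn`). So the groups `E k` define a group topology on `SL₂(K)`, finer than
the congruence topology. The kernel of the map between the two completions is represented by the
sequences in `IsKernelSeq`, and every element of `L (k²)` agrees modulo `E k` with such a sequence
(`exists_isKernelSeq`).

*Centrality.* Let `w` be a unit. By `exists_natCast_row` and Dirichlet's theorem, elementary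
operations of level `k` turn the upper left entry of a matrix of high level into a product `p₁ p₂`
of two rational primes in prescribed inverse residue classes
(`exists_mul_apply_zero_zero_eq_primes`). If `p₁ p₂` divides `w ^ (2 j) - 1`, then conjugation by
`diag (w ^ j)` changes the matrix by elementary matrices only. The order of `w` modulo `p` divides
`glOrder d p = |GL_d(𝔽_p)|`, and by varying the residue classes the greatest common divisor of the
resulting exponents is bounded by `diagExponent d`, which depends on `d` only. Hence
`diag (w ^ diagExponent d)` acts trivially on the kernel. The elements of `SL₂(K)` acting trivially
form a normal subgroup; containing a diagonal matrix of infinite order, it is all of `SL₂(K)`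
(`kernelCentralizer_eq_top`). It follows that `L (k²)` normalizes `E k`, that `A` is abelian, and
that conjugation by diagonal matrices over `K` acts trivially modulo `E k` on deep congruence
subgroups.

*Symbols.* The class in `A` of a matrix depends only on its first row `(a, b)`, and defines
`symbol π a b`, where `π` is the projection to `A`. For a prime `a = p`, multiplying `b` by `x²`
multiplies the symbol by a factor `symbolRatio π p x` independent of `b` and multiplicative in `x`
modulo `p`. So this factor has finite order dividing `glOrder d p`; it does not change when `p` is
replaced by another prime congruent to `p` modulo `k⁴ x²`, and Dirichlet's theorem provides such a
prime for which the common divisor of the two bounds divides `torsionExponent d k⁴`, a number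
independent of `p` and `x` (`symbolRatio_pow_torsionExponent`).

*Finiteness.* Any finite subset of `A` consists of symbols of rows `(p, b)` with one common prime
`p`, which may be taken large. With `n = 2 * torsionExponent d k⁴`, the symbol of `(p, b)` depends
only on the class of `b` in the units of `R / p` modulo `n`-th powers, a group with at most `n ^ d`
elements (`card_le`).
-/

namespace UnipotentSL2

/-! ### Elementary and congruence subgroups -/

section CommRing

variable {R : Type*} [CommRing R]

/-- The matrix `(a, b; c, d)`, as an element of `SL₂`. -/
def ofEntries (a b c d : R) (h : a * d - b * c = 1) : SL(2, R) :=
  ⟨!![a, b; c, d], by rw [Matrix.det_fin_two_of, h]⟩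

/-- The upper unipotent matrix `(1, x; 0, 1)`. -/
def upper (x : R) : SL(2, R) := ofEntries 1 x 0 1 (by ring)

/-- The lower unipotent matrix `(1, 0; x, 1)`. -/
def lower (x : R) : SL(2, R) := ofEntries 1 0 x 1 (by ring)

/-- The diagonal matrix `(u, 0; 0, u⁻¹)`. -/
def diag (u : Rˣ) : SL(2, R) := ofEntries (u : R) 0 0 ((u⁻¹ : Rˣ) : R) (by simp)

/-- The Weyl element `(0, 1; -1, 0)`, which exchanges the two unipotent subgroups. -/
def weyl (R : Type*) [CommRing R] : SL(2, R) := ofEntries 0 1 (-1) 0 (by ring)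

@[simp] lemma coe_ofEntries (a b c d : R) (h : a * d - b * c = 1) :
    (ofEntries a b c d h : Matrix (Fin 2) (Fin 2) R) = !![a, b; c, d] := rfl

@[simp] lemma coe_upper (x : R) : (upper x : Matrix (Fin 2) (Fin 2) R) = !![1, x; 0, 1] := rfl

@[simp] lemma coe_lower (x : R) : (lower x : Matrix (Fin 2) (Fin 2) R) = !![1, 0; x, 1] := rfl

@[simp] lemma coe_diag (u : Rˣ) :
    (diag u : Matrix (Fin 2) (Fin 2) R) = !![(u : R), 0; 0, ((u⁻¹ : Rˣ) : R)] := rfl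

@[simp] lemma coe_weyl : (weyl R : Matrix (Fin 2) (Fin 2) R) = !![0, 1; -1, 0] := rfl

@[simp] lemma mul_apply (g h : SL(2, R)) (i j : Fin 2) :
    (g * h) i j = g i 0 * h 0 j + g i 1 * h 1 j := by
  rw [Matrix.SpecialLinearGroup.coe_mul, Matrix.mul_apply, Fin.sum_univ_two]

@[simp] lemma adjugate_coe (g : SL(2, R)) :
    (g : Matrix (Fin 2) (Fin 2) R).adjugate = !![g 1 1, -g 0 1; -g 1 0, g 0 0] :=
  Matrix.adjugate_fin_two _

lemma det_eq_one (g : SL(2, R)) : g 0 0 * g 1 1 - g 0 1 * g 1 0 = 1 := by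
  rw [← Matrix.det_fin_two, g.det_coe]

lemma ext_entries {g h : SL(2, R)} (h00 : g 0 0 = h 0 0) (h01 : g 0 1 = h 0 1)
    (h10 : g 1 0 = h 1 0) (h11 : g 1 1 = h 1 1) : g = h := by
  ext i j
  fin_cases i <;> fin_cases j <;> assumption

lemma upper_add (x y : R) : upper (x + y) = upper x * upper y := by
  apply ext_entries <;> simp [add_comm]

lemma lower_add (x y : R) : lower (x + y) = lower x * lower y := by
  apply ext_entries <;> simp

lemma upper_neg (x : R) : upper (-x) = (upper x)⁻¹ := by apply ext_entries <;> simp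

lemma lower_neg (x : R) : lower (-x) = (lower x)⁻¹ := by apply ext_entries <;> simp

lemma lower_zero : lower (0 : R) = 1 := by apply ext_entries <;> simp

lemma diag_mul (u v : Rˣ) : diag (u * v) = diag u * diag v := by
  apply ext_entries <;> simp [mul_comm]

lemma diag_inv (u : Rˣ) : diag u⁻¹ = (diag u)⁻¹ := by apply ext_entries <;> simp

lemma diag_pow (u : Rˣ) (n : ℕ) : diag (u ^ n) = diag u ^ n :=
  map_pow (MonoidHom.mk' diag diag_mul) u n

lemma diag_zpow (u : Rˣ) (n : ℤ) : diag (u ^ n) = diag u ^ n :=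
  map_zpow (MonoidHom.mk' diag diag_mul) u n

lemma diag_conj_upper (u : Rˣ) (x : R) :
    diag u * upper x * (diag u)⁻¹ = upper ((u : R) ^ 2 * x) := by
  apply ext_entries <;> simp [sq, mul_right_comm]

lemma diag_conj_lower (u : Rˣ) (x : R) :
    diag u * lower x * (diag u)⁻¹ = lower (((u⁻¹ : Rˣ) : R) ^ 2 * x) := by
  apply ext_entries <;> simp [sq, mul_right_comm]

lemma weyl_conj_upper (x : R) : weyl R * upper x * (weyl R)⁻¹ = lower (-x) := by
  apply ext_entries <;> simp

lemma weyl_conj_lower (x : R) : weyl R * lower x * (weyl R)⁻¹ = upper (-x) := by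
  apply ext_entries <;> simp

lemma eq_lower_mul_of_row_eq {g h : SL(2, R)} (h0 : g 0 0 = h 0 0) (h1 : g 0 1 = h 0 1) :
    g = lower ((g * h⁻¹) 1 0) * h := by
  suffices g * h⁻¹ = lower ((g * h⁻¹) 1 0) by rw [← this, inv_mul_cancel_right]
  have hg := det_eq_one g
  have hh := det_eq_one h
  rw [h0, h1] at hg
  apply ext_entries
  · simpa [h0, h1, sub_eq_add_neg] using hh
  · simp [h0, h1, mul_comm]
  · simp
  · simpa [mul_comm, add_comm, sub_eq_add_neg] using hg

/-- The subgroup of `SL₂(R)` generated by the unipotent matrices with off-diagonal entry in `qR`. -/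
def elementary (q : R) : Subgroup SL(2, R) :=
  Subgroup.closure ({g | ∃ b : R, q ∣ b ∧ g.1 = !![1, b; 0, 1]} ∪
    {g | ∃ c : R, q ∣ c ∧ g.1 = !![1, 0; c, 1]})

lemma upper_mem_elementary {q x : R} (h : q ∣ x) : upper x ∈ elementary q :=
  Subgroup.subset_closure (Or.inl ⟨x, h, rfl⟩)

lemma lower_mem_elementary {q x : R} (h : q ∣ x) : lower x ∈ elementary q :=
  Subgroup.subset_closure (Or.inr ⟨x, h, rfl⟩)

lemma elementary_le_iff {q : R} {H : Subgroup SL(2, R)} :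
    elementary q ≤ H ↔ ∀ x, q ∣ x → upper x ∈ H ∧ lower x ∈ H := by
  refine ⟨fun h x hx => ⟨h (upper_mem_elementary hx), h (lower_mem_elementary hx)⟩, fun h => ?_⟩
  rw [elementary, Subgroup.closure_le]
  rintro g (⟨x, hx, hg⟩ | ⟨x, hx, hg⟩)
  · exact (Subtype.ext hg : g = upper x) ▸ (h x hx).1
  · exact (Subtype.ext hg : g = lower x) ▸ (h x hx).2

lemma elementary_anti {q r : R} (h : q ∣ r) : elementary r ≤ elementary q :=
  elementary_le_iff.2 fun _ hx =>
    ⟨upper_mem_elementary (h.trans hx), lower_mem_elementary (h.trans hx)⟩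

lemma conj_mem_of_mem_elementary {G : Type*} [Group G] (f : SL(2, R) →* G) {q : R} {s : G}
    {H : Subgroup G}
    (h : ∀ x, q ∣ x → s * f (upper x) * s⁻¹ ∈ H ∧ s * f (lower x) * s⁻¹ ∈ H)
    {e : SL(2, R)} (he : e ∈ elementary q) : s * f e * s⁻¹ ∈ H :=
  (elementary_le_iff (H := H.comap ((MulAut.conj s).toMonoidHom.comp f))).2 h he

lemma diag_conj_mem_elementary (u : Rˣ) {q : R} {e : SL(2, R)} (he : e ∈ elementary q) :
    diag u * e * (diag u)⁻¹ ∈ elementary q := by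
  refine conj_mem_of_mem_elementary (MonoidHom.id _) (fun x hx => ?_) he
  simp only [MonoidHom.id_apply, diag_conj_upper, diag_conj_lower]
  exact ⟨upper_mem_elementary (hx.mul_left _), lower_mem_elementary (hx.mul_left _)⟩

/-- Writing `u = 1 + q * (q * z)`, the four factors come from row reduction of `diag u`. -/
lemma diag_mem_elementary {q : R} {u : Rˣ} (h : q ^ 2 ∣ (u : R) - 1) : diag u ∈ elementary q := by
  obtain ⟨z, hz⟩ := h
  have hu : (u : R) = 1 + q ^ 2 * z := by linear_combination hz
  have huu : (1 + q ^ 2 * z) * ((u⁻¹ : Rˣ) : R) = 1 := hu ▸ u.mul_inv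
  have hfactor : diag u = lower (q * (-z * ((u⁻¹ : Rˣ) : R))) * upper q * lower (q * z) *
      upper (q * (-((u⁻¹ : Rˣ) : R))) := by
    apply ext_entries
    · simp [hu]
      ring
    · simp
      linear_combination q * huu
    · simp
      linear_combination q * z * huu
    · simp
      linear_combination (1 - q ^ 2 * z * ((u⁻¹ : Rˣ) : R)) * huu
  rw [hfactor]
  exact mul_mem (mul_mem (mul_mem (lower_mem_elementary (dvd_mul_right _ _))
    (upper_mem_elementary dvd_rfl)) (lower_mem_elementary (dvd_mul_right _ _)))
    (upper_mem_elementary (dvd_mul_right _ _))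

/-- The principal congruence subgroup of level `q`. -/
def principal (q : R) : Subgroup SL(2, R) :=
  (Matrix.SpecialLinearGroup.map (n := Fin 2) (Ideal.Quotient.mk (Ideal.span {q}))).ker

instance principal_normal (q : R) : (principal q).Normal :=
  inferInstanceAs (MonoidHom.ker _).Normal

lemma mem_principal {q : R} {g : SL(2, R)} : g ∈ principal q ↔
    q ∣ g 0 0 - 1 ∧ q ∣ g 0 1 ∧ q ∣ g 1 0 ∧ q ∣ g 1 1 - 1 := by
  have dvd_sub_iff (x y : R) : q ∣ x - y ↔
      Ideal.Quotient.mk (Ideal.span {q}) x = Ideal.Quotient.mk (Ideal.span {q}) y := by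
    rw [Ideal.Quotient.eq, Ideal.mem_span_singleton]
  rw [← sub_zero (g 0 1), ← sub_zero (g 1 0)]
  simp only [dvd_sub_iff, map_one, map_zero]
  rw [principal, MonoidHom.mem_ker]
  refine ⟨fun h => ?_, fun ⟨h00, h01, h10, h11⟩ => ext_entries h00 h01 h10 h11⟩
  have apply_eq (i j : Fin 2) := congrArg (fun m => m i j) h
  exact ⟨apply_eq 0 0, apply_eq 0 1, apply_eq 1 0, apply_eq 1 1⟩

lemma principal_anti {q r : R} (h : q ∣ r) : principal r ≤ principal q := by
  intro g hg
  rw [mem_principal] at hg ⊢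
  exact ⟨h.trans hg.1, h.trans hg.2.1, h.trans hg.2.2.1, h.trans hg.2.2.2⟩

lemma upper_mem_principal {q x : R} (h : q ∣ x) : upper x ∈ principal q :=
  mem_principal.2 (by simp [h])

lemma lower_mem_principal {q x : R} (h : q ∣ x) : lower x ∈ principal q :=
  mem_principal.2 (by simp [h])

lemma elementary_le_principal (q : R) : elementary q ≤ principal q :=
  elementary_le_iff.2 fun _ hx => ⟨upper_mem_principal hx, lower_mem_principal hx⟩

lemma exists_lower_mul_of_row_eq {q : R} {g h : SL(2, R)} (hg : g ∈ principal q)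
    (hh : h ∈ principal q) (h0 : g 0 0 = h 0 0) (h1 : g 0 1 = h 0 1) :
    ∃ x, q ∣ x ∧ g = lower x * h :=
  ⟨_, (mem_principal.1 (mul_mem hg (inv_mem hh))).2.2.1, eq_lower_mul_of_row_eq h0 h1⟩

end CommRing

/-! ### Rational subspaces of a number field -/

section RationalSubspace

lemma exists_forall_ge_add_natCast_ne_zero {R : Type*} [AddGroupWithOne R] [CharZero R] (x : R) :
    ∃ N : ℕ, ∀ n ≥ N, x + n ≠ 0 := by
  by_cases h : ∃ n : ℕ, x + n = 0
  · obtain ⟨n, hn⟩ := h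
    refine ⟨n + 1, fun m hm hm0 => ?_⟩
    have : m = n := Nat.cast_injective (add_left_cancel (hm0.trans hn.symm))
    omega
  · exact ⟨0, fun n _ hn => h ⟨n, hn⟩⟩

/-- Evaluate at `η` the Lagrange interpolation, in the first `deg η` admissible nodes `-n`, of
`∏ (X + n) - minpoly η`. -/
lemma one_mem_of_forall_inv_add_natCast_mem {F K : Type*} [Field F] [CharZero F] [Field K]
    [Algebra F K] (W : Submodule F K) {η : K} (hη : IsIntegral F η)
    (hW : ∀ n : ℕ, η + n ≠ 0 → (η + n)⁻¹ ∈ W) : (1 : K) ∈ W := by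
  have : CharZero K := charZero_of_injective_algebraMap (algebraMap F K).injective
  obtain ⟨N, hN⟩ := exists_forall_ge_add_natCast_ne_zero η
  let s := Finset.range (minpoly F η).natDegree
  let v : ℕ → F := fun i => -((N + i : ℕ) : F)
  let vK : ℕ → K := fun i => algebraMap F K (v i)
  have sub_vK (i : ℕ) : η - vK i = η + (N + i : ℕ) := by
    simp only [vK, v, map_neg, map_natCast, sub_neg_eq_add]
  have vK_injOn : Set.InjOn vK s := fun i _ j _ hij => by
    simpa [v] using (algebraMap F K).injective hij
  let P := Lagrange.nodal s v - minpoly F η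
  have degree_P : (P.map (algebraMap F K)).degree < s.card := by
    have hdeg : (Lagrange.nodal s v).degree = (minpoly F η).degree := by
      rw [Lagrange.degree_nodal, Finset.card_range,
        Polynomial.degree_eq_natDegree (minpoly.ne_zero hη)]
    rw [Polynomial.degree_map, ← Lagrange.degree_nodal (v := v)]
    refine Polynomial.degree_sub_lt_left hdeg Lagrange.nodal_monic.ne_zero ?_
    rw [Lagrange.nodal_monic.leadingCoeff, (minpoly.monic hη).leadingCoeff]
  have prod_ne_zero : ∏ i ∈ s, (η - vK i) ≠ 0 :=
    Finset.prod_ne_zero_iff.2 fun i _ => sub_vK i ▸ hN _ (Nat.le_add_right N i)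
  have partial_fractions : (1 : K) = ∑ i ∈ s, Lagrange.nodalWeight s vK i * (η - vK i)⁻¹ *
      (P.map (algebraMap F K)).eval (vK i) := by
    have hPη : (P.map (algebraMap F K)).eval η = ∏ i ∈ s, (η - vK i) := by
      simp [P, Lagrange.nodal, Polynomial.map_prod, Polynomial.eval_prod, vK,
        Polynomial.eval_map_algebraMap]
    have heval := congrArg (Polynomial.eval η) (Lagrange.eq_interpolate vK_injOn degree_P)
    rw [hPη, Lagrange.eval_interpolate_not_at_node _ fun i hi h =>
      prod_ne_zero (Finset.prod_eq_zero hi (sub_eq_zero.2 h)), Lagrange.eval_nodal] at heval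
    exact mul_left_cancel₀ prod_ne_zero (by rw [mul_one]; exact heval)
  rw [partial_fractions]
  refine Submodule.sum_mem _ fun i _ => ?_
  have hterm : Lagrange.nodalWeight s vK i * (η - vK i)⁻¹ *
      (P.map (algebraMap F K)).eval (vK i) =
      (Lagrange.nodalWeight s v i * P.eval (v i)) • (η + (N + i : ℕ))⁻¹ := by
    rw [sub_vK, Polynomial.eval_map_apply, Algebra.smul_def, map_mul, mul_right_comm]
    simp [Lagrange.nodalWeight, vK]
  rw [hterm]
  exact W.smul_mem _ (hW _ (hN _ (Nat.le_add_right N i)))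

lemma inv_mul_mem_of_forall_mul_mem {F K : Type*} [Field F] [Field K] [Algebra F K]
    [FiniteDimensional F K] {Y : Submodule F K} {f : K} (hf : ∀ z ∈ Y, f * z ∈ Y) {z : K}
    (hz : z ∈ Y) : f⁻¹ * z ∈ Y := by
  rcases eq_or_ne f 0 with rfl | hf0
  · simp
  have hinj : Function.Injective ((LinearMap.mulLeft F f).restrict hf) :=
    fun a b hab => Subtype.ext (mul_left_cancel₀ hf0 (congrArg Subtype.val hab))
  obtain ⟨y, hy⟩ := LinearMap.injective_iff_surjective.1 hinj ⟨z, hz⟩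
  have hy' : f * y = z := congrArg Subtype.val hy
  rw [← hy', inv_mul_cancel_left₀ hf0]
  exact y.2

lemma exists_natCast_mul_mem_of_mem_span_rat {A : Type*} [Ring A] [Algebra ℚ A]
    {M : AddSubgroup A} {z : A} (hz : z ∈ Submodule.span ℚ (M : Set A)) :
    ∃ N : ℕ, 1 ≤ N ∧ (N : A) * z ∈ M := by
  induction hz using Submodule.span_induction with
  | mem z hz => exact ⟨1, le_rfl, by simpa using hz⟩
  | zero => exact ⟨1, le_rfl, by simp⟩
  | add a b _ _ iha ihb =>
    obtain ⟨m, hm, ha⟩ := iha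
    obtain ⟨n, hn, hb⟩ := ihb
    refine ⟨m * n, Nat.mul_pos hm hn, ?_⟩
    have hmn := M.add_mem (M.nsmul_mem ha n) (M.nsmul_mem hb m)
    rwa [nsmul_eq_mul, nsmul_eq_mul, ← mul_assoc, ← mul_assoc, ← Nat.cast_mul, ← Nat.cast_mul,
      mul_comm n, ← mul_add] at hmn
  | smul q z _ ih =>
    obtain ⟨n, hn, hz⟩ := ih
    refine ⟨q.den * n, Nat.mul_pos q.den_pos hn, ?_⟩
    have hq : ((q.den * n : ℕ) : A) * q • z = q.num • ((n : A) * z) := by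
      rw [Nat.cast_mul, mul_smul_comm, mul_assoc, ← nsmul_eq_mul q.den, ← Nat.cast_smul_eq_nsmul ℚ,
        smul_smul, Rat.mul_den_eq_num, Int.cast_smul_eq_zsmul]
    exact hq ▸ M.zsmul_mem hz q.num

end RationalSubspace

/-! ### Units and denominators -/

lemma exists_dvd_pow_sub_one {R : Type*} [CommRing R] {x b : R} [Finite (R ⧸ Ideal.span {b})]
    (h : IsCoprime x b) : ∃ j : ℕ, 0 < j ∧ b ∣ x ^ j - 1 := by
  have hx : IsUnit (Ideal.Quotient.mk (Ideal.span {b}) x) := by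
    obtain ⟨s, t, hst⟩ := h
    refine IsUnit.of_mul_eq_one (Ideal.Quotient.mk _ s) ?_
    rw [← map_mul, ← map_one (Ideal.Quotient.mk (Ideal.span {b})), Ideal.Quotient.eq,
      Ideal.mem_span_singleton]
    exact ⟨-t, by linear_combination hst⟩
  obtain ⟨u, hu⟩ := hx
  obtain ⟨j, hj, huj⟩ := isOfFinOrder_iff_pow_eq_one.1 (isOfFinOrder_of_finite u)
  refine ⟨j, hj, ?_⟩
  rw [← Ideal.mem_span_singleton, ← Ideal.Quotient.eq, map_pow, ← hu, ← Units.val_pow_eq_pow_val,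
    huj, Units.val_one, map_one]

lemma isCoprime_unit {R : Type*} [CommSemiring R] (w : Rˣ) (x : R) : IsCoprime (w : R) x :=
  isCoprime_one_left.of_isCoprime_of_dvd_left (isUnit_iff_dvd_one.1 w.isUnit)

section NumberField

variable {K : Type*} [Field K] [NumberField K]

lemma exists_unit_not_isOfFinOrder (hK : 1 < Fintype.card (InfinitePlace K)) :
    ∃ w : (𝓞 K)ˣ, ¬IsOfFinOrder w := by
  by_contra! h
  have htorsion : Module.IsTorsion ℤ (Additive (𝓞 K)ˣ) := by
    intro w
    obtain ⟨n, hn, hwn⟩ := isOfFinOrder_iff_pow_eq_one.1 (h w.toMul)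
    refine ⟨⟨n, mem_nonZeroDivisors_of_ne_zero (by omega)⟩, ?_⟩
    simpa using congrArg Additive.ofMul hwn
  have hrank := htorsion.finrank_eq_zero
  rw [Units.finrank_eq, Units.rank] at hrank
  omega

lemma finite_quotient_span_singleton {b : 𝓞 K} (hb : b ≠ 0) :
    Finite (𝓞 K ⧸ Ideal.span {b}) :=
  Ideal.finiteQuotientOfFreeOfNeBot _ (by simpa using hb)

lemma exists_dvd_unit_pow_sub_one (w : (𝓞 K)ˣ) {N : ℕ} (hN : 1 ≤ N) :
    ∃ j : ℕ, 0 < j ∧ (N : 𝓞 K) ∣ ((w ^ j : (𝓞 K)ˣ) : 𝓞 K) - 1 := by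
  have := finite_quotient_span_singleton (Nat.cast_ne_zero (R := 𝓞 K).2 (by omega : N ≠ 0))
  simpa using exists_dvd_pow_sub_one (isCoprime_unit w (N : 𝓞 K))

lemma exists_natCast_mul_eq_algebraMap (x : K) :
    ∃ N : ℕ, 1 ≤ N ∧ ∃ r : 𝓞 K, (N : K) * x = algebraMap (𝓞 K) K r := by
  have hx : IsAlgebraic ℤ x :=
    (IsFractionRing.isAlgebraic_iff ℤ ℚ K).2 (Algebra.IsAlgebraic.isAlgebraic x)
  obtain ⟨n, hn, hint⟩ := hx.exists_integral_multiple
  have hint' : IsIntegral ℤ ((n.natAbs : K) * x) := by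
    rcases Int.natAbs_eq n with h | h <;> rw [h] at hint
    · simpa [zsmul_eq_mul] using hint
    · simpa [zsmul_eq_mul] using hint.neg
  exact ⟨n.natAbs, Int.natAbs_pos.2 hn, ⟨_, hint'⟩, rfl⟩

end NumberField

/-! ### Conjugation by elements of SL₂(K) -/

/-- Conjugation by `s` is continuous at `1` for the topology in which the subgroups `H k`, for
`k ≥ 1`, form a basis of neighbourhoods of `1`. -/
def ConjContinuous {G : Type*} [Group G] (H : ℕ → Subgroup G) (s : G) : Prop :=
  ∀ k : ℕ, 1 ≤ k → ∃ k' : ℕ, 1 ≤ k' ∧ ∀ g ∈ H k', s * g * s⁻¹ ∈ H k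

lemma ConjContinuous.mul {G : Type*} [Group G] {H : ℕ → Subgroup G} {s t : G}
    (hs : ConjContinuous H s) (ht : ConjContinuous H t) : ConjContinuous H (s * t) := by
  intro k hk
  obtain ⟨l, hl, hsl⟩ := hs k hk
  obtain ⟨m, hm, htm⟩ := ht l hl
  refine ⟨m, hm, fun g hg => ?_⟩
  rw [mul_inv_rev, mul_assoc s, mul_assoc s, ← mul_assoc, ← mul_assoc, mul_assoc s]
  exact hsl _ (htm _ hg)

lemma lower_eq_weyl_mul {R : Type*} [CommRing R] (x : R) :
    lower x = weyl R * upper (-x) * (weyl R * weyl R * weyl R) := by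
  apply ext_entries <;> simp

lemma upper_lower_induction {F : Type*} [Field F] {P : SL(2, F) → Prop} (hupper : ∀ x, P (upper x))
    (hlower : ∀ x, P (lower x)) (hmul : ∀ g h, P g → P h → P (g * h)) (g : SL(2, F)) : P g := by
  refine Matrix.SL2.transvection_induction P (fun i j hij c => ?_) hmul g
  fin_cases i <;> fin_cases j <;> simp only [ne_eq, not_true_eq_false] at hij
  · have htransvection : Matrix.SpecialLinearGroup.transvection hij c = upper c := by
      apply ext_entries <;> simp [Matrix.SpecialLinearGroup.transvection_coe]
    exact htransvection ▸ hupper c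
  · have htransvection : Matrix.SpecialLinearGroup.transvection hij c = lower c := by
      apply ext_entries <;> simp [Matrix.SpecialLinearGroup.transvection_coe]
    exact htransvection ▸ hlower c

lemma ConjContinuous.of_upper_of_weyl {F : Type*} [Field F] {H : ℕ → Subgroup SL(2, F)}
    (hupper : ∀ x, ConjContinuous H (upper x)) (hweyl : ConjContinuous H (weyl F))
    (s : SL(2, F)) : ConjContinuous H s := by
  refine upper_lower_induction hupper (fun x => ?_) (fun _ _ => ConjContinuous.mul) s
  rw [lower_eq_weyl_mul]
  exact (hweyl.mul (hupper _)).mul ((hweyl.mul hweyl).mul hweyl)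

section LowerConj

variable {R : Type*} [CommRing R]

/-- The additive group of those `c` for which the conjugate of `lower c` by `s` lies in `H`. -/
def lowerConj (s : SL(2, R)) (H : Subgroup SL(2, R)) : AddSubgroup R where
  carrier := {c | s * lower c * s⁻¹ ∈ H}
  zero_mem' := by simp [lower_zero, one_mem]
  add_mem' {a b} ha hb := by
    rw [Set.mem_ofPred_eq, lower_add, ← conj_mul]
    exact mul_mem ha hb
  neg_mem' {a} ha := by
    rw [Set.mem_ofPred_eq, lower_neg, ← conj_inv]
    exact inv_mem ha

lemma mem_lowerConj {s : SL(2, R)} {H : Subgroup SL(2, R)} {c : R} :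
    c ∈ lowerConj s H ↔ s * lower c * s⁻¹ ∈ H := Iff.rfl

lemma lowerConj_mul {s h : SL(2, R)} {H : Subgroup SL(2, R)} (hh : h ∈ H) :
    lowerConj (h * s) H = lowerConj s H := by
  ext c
  rw [mem_lowerConj, mem_lowerConj, mul_inv_rev, mul_assoc h, mul_assoc h, ← mul_assoc (s * _),
    ← mul_assoc h, H.mul_mem_cancel_right (inv_mem hh), H.mul_mem_cancel_left hh]

lemma sq_mul_mem_lowerConj {x : R} {H : Subgroup SL(2, R)} {u : Rˣ}
    (hconj : ∀ g ∈ H, diag u⁻¹ * g * (diag u⁻¹)⁻¹ ∈ H)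
    (hupper : upper ((1 - ((u⁻¹ : Rˣ) : R) ^ 2) * x) ∈ H) {c : R}
    (hc : c ∈ lowerConj (upper x) H) : (u : R) ^ 2 * c ∈ lowerConj (upper x) H := by
  have hx : upper x = upper ((1 - ((u⁻¹ : Rˣ) : R) ^ 2) * x) *
      upper (((u⁻¹ : Rˣ) : R) ^ 2 * x) := by
    rw [← upper_add, ← add_mul, sub_add_cancel, one_mul]
  have hdiag : diag u⁻¹ * (upper x * lower c * (upper x)⁻¹) * (diag u⁻¹)⁻¹ =
      upper (((u⁻¹ : Rˣ) : R) ^ 2 * x) * lower ((u : R) ^ 2 * c) *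
        (upper (((u⁻¹ : Rˣ) : R) ^ 2 * x))⁻¹ := by
    rw [← conj_mul, ← conj_mul, ← conj_inv, diag_conj_upper, diag_conj_lower, inv_inv]
  rw [hx, lowerConj_mul hupper, mem_lowerConj, ← hdiag]
  exact hconj _ hc

end LowerConj

lemma upper_mul_lower_mul_upper_inv {F : Type*} [Field F] {y : F} (hy : y ≠ 0) (u : Fˣ) :
    upper y * lower ((u - 1) * y⁻¹) * (upper y)⁻¹ =
      lower ((u - 1) * y⁻¹ * ((u⁻¹ : Fˣ) : F)) * diag u *
        upper (-((u - 1) * y * ((u⁻¹ : Fˣ) : F))) := by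
  have hu := u.ne_zero
  apply ext_entries <;> simp <;> field_simp <;> ring

section NumberField

variable {K : Type*} [Field K]

local notation "ι" => algebraMap (𝓞 K) K

/-- The inclusion of `SL₂(𝓞 K)` in `SL₂(K)`. -/
noncomputable def incl (K : Type*) [Field K] : SL(2, 𝓞 K) →* SL(2, K) :=
  Matrix.SpecialLinearGroup.map (algebraMap (𝓞 K) K)

@[simp] lemma incl_apply (g : SL(2, 𝓞 K)) (i j : Fin 2) : incl K g i j = ι (g i j) := rfl

lemma incl_upper (x : 𝓞 K) : incl K (upper x) = upper (ι x) := by apply ext_entries <;> simp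

lemma incl_lower (x : 𝓞 K) : incl K (lower x) = lower (ι x) := by apply ext_entries <;> simp

lemma incl_diag (u : (𝓞 K)ˣ) : incl K (diag u) = diag (Units.map (algebraMap (𝓞 K) K) u) := by
  apply ext_entries <;> simp [← map_inv]

lemma incl_injective : Function.Injective (incl K) :=
  fun g h hgh => by
    have apply_eq (i j : Fin 2) : g i j = h i j :=
      RingOfIntegers.coe_injective (congrArg (fun m => m i j) hgh)
    exact ext_entries (apply_eq 0 0) (apply_eq 0 1) (apply_eq 1 0) (apply_eq 1 1)

/-- The image in `SL₂(K)` of the elementary subgroup of level `k`. -/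
noncomputable def elementaryIn (K : Type*) [Field K] (k : ℕ) : Subgroup SL(2, K) :=
  (elementary (k : 𝓞 K)).map (incl K)

/-- The image in `SL₂(K)` of the principal congruence subgroup of level `k`. -/
noncomputable def principalIn (K : Type*) [Field K] (k : ℕ) : Subgroup SL(2, K) :=
  (principal (k : 𝓞 K)).map (incl K)

lemma incl_mem_elementaryIn {k : ℕ} {g : SL(2, 𝓞 K)} :
    incl K g ∈ elementaryIn K k ↔ g ∈ elementary (k : 𝓞 K) :=
  Subgroup.mem_map_iff_mem incl_injective

lemma incl_mem_principalIn {k : ℕ} {g : SL(2, 𝓞 K)} :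
    incl K g ∈ principalIn K k ↔ g ∈ principal (k : 𝓞 K) :=
  Subgroup.mem_map_iff_mem incl_injective

lemma elementaryIn_anti {k l : ℕ} (h : k ∣ l) : elementaryIn K l ≤ elementaryIn K k :=
  Subgroup.map_mono (elementary_anti (Nat.cast_dvd_cast h))

lemma upper_mem_elementaryIn {k : ℕ} {x : K} (h : ∃ r, x = k * ι r) :
    upper x ∈ elementaryIn K k := by
  obtain ⟨r, rfl⟩ := h
  rw [← map_natCast ι, ← map_mul, ← incl_upper, incl_mem_elementaryIn]
  exact upper_mem_elementary (dvd_mul_right _ _)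

lemma lower_mem_elementaryIn {k : ℕ} {x : K} (h : ∃ r, x = k * ι r) :
    lower x ∈ elementaryIn K k := by
  obtain ⟨r, rfl⟩ := h
  rw [← map_natCast ι, ← map_mul, ← incl_lower, incl_mem_elementaryIn]
  exact lower_mem_elementary (dvd_mul_right _ _)

lemma mem_principalIn {k : ℕ} {g : SL(2, K)} : g ∈ principalIn K k ↔ ∃ a b c d : 𝓞 K,
    g 0 0 = 1 + k * ι a ∧ g 0 1 = k * ι b ∧ g 1 0 = k * ι c ∧ g 1 1 = 1 + k * ι d := by
  constructor
  · rintro ⟨g, hg, rfl⟩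
    obtain ⟨⟨a, ha⟩, ⟨b, hb⟩, ⟨c, hc⟩, ⟨d, hd⟩⟩ := mem_principal.1 hg
    refine ⟨a, b, c, d, ?_, ?_, ?_, ?_⟩
    · simp [eq_add_of_sub_eq' ha]
    · simp [hb]
    · simp [hc]
    · simp [eq_add_of_sub_eq' hd]
  · rintro ⟨a, b, c, d, ha, hb, hc, hd⟩
    refine ⟨ofEntries (1 + k * a) (k * b) (k * c) (1 + k * d) ?_, ?_, ?_⟩
    · have hdet := det_eq_one g
      rw [ha, hb, hc, hd] at hdet
      apply RingOfIntegers.coe_injective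
      simpa using hdet
    · exact mem_principal.2 (by simp)
    · apply ext_entries <;> simp [ha, hb, hc, hd]

lemma unit_sq_mul_mem_lowerConj {k : ℕ} {x : K} {v : (𝓞 K)ˣ}
    (hx : ∃ r, (ι v ^ 2 - 1) * x = k * ι r) {c : K}
    (hc : c ∈ lowerConj (upper x) (elementaryIn K k)) :
    ι v ^ 2 * c ∈ lowerConj (upper x) (elementaryIn K k) := by
  set u := Units.map (algebraMap (𝓞 K) K : 𝓞 K →* K) v
  have hconj : ∀ g ∈ elementaryIn K k, diag u⁻¹ * g * (diag u⁻¹)⁻¹ ∈ elementaryIn K k := by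
    rintro _ ⟨e, he, rfl⟩
    rw [← map_inv, ← incl_diag, ← map_inv, ← map_mul, ← map_mul, incl_mem_elementaryIn]
    exact diag_conj_mem_elementary _ he
  have hupper : upper ((1 - ((u⁻¹ : Kˣ) : K) ^ 2) * x) ∈ elementaryIn K k := by
    obtain ⟨r, hr⟩ := hx
    refine upper_mem_elementaryIn ⟨((v⁻¹ : (𝓞 K)ˣ) : 𝓞 K) ^ 2 * r, ?_⟩
    have hv : ι v * ι ((v⁻¹ : (𝓞 K)ˣ) : 𝓞 K) = 1 := by rw [← map_mul, Units.mul_inv, map_one]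
    rw [← map_inv, Units.coe_map, MonoidHom.coe_coe, map_mul, map_pow]
    generalize ι ((v⁻¹ : (𝓞 K)ˣ) : 𝓞 K) = vi at hv ⊢
    linear_combination vi ^ 2 * hr - x * (ι v * vi + 1) * hv
  exact sq_mul_mem_lowerConj hconj hupper hc

lemma sub_one_mul_inv_mem_lowerConj {k : ℕ} {y : K} (hy : y ≠ 0) {u : (𝓞 K)ˣ}
    (hu : (k : 𝓞 K) ^ 2 ∣ u - 1) (h : ∃ r, (ι u - 1) * y = k * ι r)
    (h' : ∃ r, (ι u - 1) * y⁻¹ = k * ι r) :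
    (ι u - 1) * y⁻¹ ∈ lowerConj (upper y) (elementaryIn K k) := by
  obtain ⟨r, hr⟩ := h
  obtain ⟨s, hs⟩ := h'
  have hfactor := upper_mul_lower_mul_upper_inv hy (Units.map (algebraMap (𝓞 K) K) u)
  rw [Units.coe_map, MonoidHom.coe_coe] at hfactor
  rw [mem_lowerConj, hfactor, ← incl_diag]
  refine mul_mem (mul_mem (lower_mem_elementaryIn ⟨s * ((u⁻¹ : (𝓞 K)ˣ) : 𝓞 K), ?_⟩)
    (incl_mem_elementaryIn.2 (diag_mem_elementary hu)))
    (upper_mem_elementaryIn ⟨-(r * ((u⁻¹ : (𝓞 K)ˣ) : 𝓞 K)), ?_⟩)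
  · rw [hs, ← map_inv, Units.coe_map, MonoidHom.coe_coe, map_mul, mul_assoc]
  · rw [hr, ← map_inv, Units.coe_map, MonoidHom.coe_coe, map_neg, map_mul, mul_assoc, mul_neg]

variable [NumberField K]

lemma conjContinuous_principalIn (s : SL(2, K)) : ConjContinuous (principalIn K) s := by
  refine .of_upper_of_weyl (fun x k hk => ?_) (fun k hk => ⟨k, hk, fun g hg => ?_⟩) s
  · obtain ⟨N, hN, r, hr⟩ := exists_natCast_mul_eq_algebraMap x
    refine ⟨k * N ^ 2, Nat.mul_pos hk (Nat.pow_pos hN), fun g hg => ?_⟩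
    obtain ⟨a, b, c, d, ha, hb, hc, hd⟩ := mem_principalIn.1 hg
    refine mem_principalIn.2 ⟨N ^ 2 * a + N * r * c,
      N ^ 2 * b + N * r * (d - a) - r ^ 2 * c, N ^ 2 * c, N ^ 2 * d - N * r * c, ?_, ?_, ?_, ?_⟩ <;>
    · simp [ha, hb, hc, hd, ← hr]
      ring
  · obtain ⟨a, b, c, d, ha, hb, hc, hd⟩ := mem_principalIn.1 hg
    exact mem_principalIn.2
      ⟨d, -c, -b, a, by simp [hd], by simp [hc], by simp [hb], by simp [ha]⟩

lemma exists_unit_sq_sub_one_mul_eq (hK : 1 < Fintype.card (InfinitePlace K)) {k : ℕ} (hk : 1 ≤ k)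
    (S : Finset K) : ∃ v : (𝓞 K)ˣ, v ^ 2 ≠ 1 ∧ (k : 𝓞 K) ^ 2 ∣ (v : 𝓞 K) ^ 2 - 1 ∧
      ∀ x ∈ S, ∃ r, (ι v ^ 2 - 1) * x = k * ι r := by
  classical
  obtain ⟨w, hw⟩ := exists_unit_not_isOfFinOrder hK
  choose N hN r hr using exists_natCast_mul_eq_algebraMap (K := K)
  obtain ⟨j, hj, hdvd⟩ := exists_dvd_unit_pow_sub_one w (N := k ^ 2 * ∏ x ∈ S, N x)
    (Nat.mul_pos (Nat.pow_pos hk) (Finset.prod_pos fun x _ => hN x))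
  set v := w ^ j
  have hdvd_sq : ((k ^ 2 * ∏ x ∈ S, N x : ℕ) : 𝓞 K) ∣ (v : 𝓞 K) ^ 2 - 1 := by
    simpa using hdvd.trans (sub_dvd_pow_sub_pow (v : 𝓞 K) 1 2)
  push_cast at hdvd_sq
  refine ⟨v, fun hv => hw (isOfFinOrder_iff_pow_eq_one.2 ⟨j * 2, by omega, by rwa [pow_mul]⟩),
    (dvd_mul_right _ _).trans hdvd_sq, fun x hx => ?_⟩
  obtain ⟨t, ht⟩ := hdvd_sq
  have htK := congrArg ι ht
  rw [map_sub, map_one, map_pow, ← Finset.mul_prod_erase _ _ hx] at htK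
  refine ⟨k * (∏ y ∈ S.erase x, (N y : 𝓞 K)) * t * r x, ?_⟩
  rw [htK]
  simp only [map_mul, map_pow, map_natCast, ← hr]
  ring

lemma inv_mem_span_lowerConj (hK : 1 < Fintype.card (InfinitePlace K)) {k : ℕ} (hk : 1 ≤ k)
    {x y : K} (hy : y ≠ 0) (hxy : ∃ r, y = k * ι r + x) :
    y⁻¹ ∈ Submodule.span ℚ (lowerConj (upper x) (elementaryIn K k) : Set K) := by
  classical
  obtain ⟨v, hv, hdvd, hmul⟩ := exists_unit_sq_sub_one_mul_eq hK hk {x, y, y⁻¹}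
  have hv_ne : ι v ^ 2 - 1 ≠ 0 := fun h => hv <| Units.ext <| RingOfIntegers.coe_injective <| by
    simpa using sub_eq_zero.1 h
  set Y := Submodule.span ℚ (lowerConj (upper x) (elementaryIn K k) : Set K)
  have hstable : ∀ z ∈ Y, (ι v ^ 2 - 1) * z ∈ Y := by
    intro z hz
    rw [sub_one_mul]
    refine sub_mem ?_ hz
    induction hz using Submodule.span_induction with
    | mem c hc => exact Submodule.subset_span (unit_sq_mul_mem_lowerConj (hmul x (by simp)) hc)
    | zero => simp
    | add a b _ _ iha ihb => rw [mul_add]; exact add_mem iha ihb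
    | smul q a _ iha => rw [mul_smul_comm]; exact Y.smul_mem q iha
  have hmem := sub_one_mul_inv_mem_lowerConj hy (u := v ^ 2) (k := k) (by simpa using hdvd)
    (by simpa using hmul y (by simp)) (by simpa using hmul y⁻¹ (by simp))
  obtain ⟨r, rfl⟩ := hxy
  rw [upper_add, lowerConj_mul (upper_mem_elementaryIn ⟨r, rfl⟩), Units.val_pow_eq_pow_val,
    map_pow] at hmem
  simpa only [inv_mul_cancel_left₀ hv_ne] using
    inv_mul_mem_of_forall_mul_mem hstable (Submodule.subset_span hmem)

lemma span_lowerConj_eq_top (hK : 1 < Fintype.card (InfinitePlace K)) (x : K) {k : ℕ}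
    (hk : 1 ≤ k) :
    Submodule.span ℚ (lowerConj (upper x) (elementaryIn K k) : Set K) = ⊤ := by
  set Y := Submodule.span ℚ (lowerConj (upper x) (elementaryIn K k) : Set K)
  have hk0 : (k : K) ≠ 0 := Nat.cast_ne_zero.2 (by omega)
  have inv_mem (σ : 𝓞 K) (hσ : ι σ ≠ 0) : (ι σ)⁻¹ ∈ Y := by
    have hone : (1 : K) ∈ Y.comap (LinearMap.mulLeft ℚ ((k : K) * ι σ)⁻¹) := by
      refine one_mem_of_forall_inv_add_natCast_mem _ (η := x / (k * ι σ))
        (Algebra.IsIntegral.isIntegral _) fun n hn => ?_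
      have hfactor : (k : K) * ι (n * σ) + x = (k * ι σ) * (x / (k * ι σ) + n) := by
        rw [map_mul, map_natCast]
        field_simp
        ring
      have hy := mul_ne_zero (mul_ne_zero hk0 hσ) hn
      have hinv := inv_mem_span_lowerConj hK hk (hfactor ▸ hy) ⟨n * σ, rfl⟩
      rwa [hfactor, mul_inv] at hinv
    rw [Submodule.mem_comap, LinearMap.mulLeft_apply, mul_one, mul_inv] at hone
    have hsmul := Y.smul_mem (k : ℚ) hone
    rwa [Algebra.smul_def, map_natCast, mul_inv_cancel_left₀ hk0] at hsmul
  refine eq_top_iff.2 fun z _ => ?_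
  rcases eq_or_ne z 0 with rfl | hz
  · exact Y.zero_mem
  obtain ⟨N, hN, r, hr⟩ := exists_natCast_mul_eq_algebraMap z⁻¹
  have hN0 : (N : K) ≠ 0 := Nat.cast_ne_zero.2 (by omega)
  have hsmul := Y.smul_mem (N : ℚ) (inv_mem r (hr ▸ mul_ne_zero hN0 (inv_ne_zero hz)))
  rwa [Algebra.smul_def, map_natCast, ← hr, mul_inv, inv_inv, mul_inv_cancel_left₀ hN0] at hsmul

lemma exists_forall_natCast_mul_mem_of_span_rat_eq_top {M : AddSubgroup K}
    (hM : Submodule.span ℚ (M : Set K) = ⊤) :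
    ∃ N : ℕ, 1 ≤ N ∧ ∀ r : 𝓞 K, (N : K) * ι r ∈ M := by
  let b := RingOfIntegers.basis K
  choose f hf_pos hf using fun i => exists_natCast_mul_mem_of_mem_span_rat
    (hM ▸ Submodule.mem_top : ι (b i) ∈ Submodule.span ℚ (M : Set K))
  refine ⟨∏ i, f i, Nat.one_le_iff_ne_zero.2 (Finset.prod_ne_zero_iff.2 fun i _ =>
    Nat.one_le_iff_ne_zero.1 (hf_pos i)), fun r => ?_⟩
  rw [← b.sum_repr r, map_sum, Finset.mul_sum]
  refine sum_mem fun i _ => ?_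
  rw [← Finset.prod_erase_mul _ _ (Finset.mem_univ i)]
  have hmul := M.zsmul_mem (M.nsmul_mem (hf i) (∏ j ∈ Finset.univ.erase i, f j)) (b.repr r i)
  rwa [nsmul_eq_mul, ← mul_assoc, ← mul_smul_comm, ← map_zsmul, ← Nat.cast_mul] at hmul

lemma conjContinuous_elementaryIn (hK : 1 < Fintype.card (InfinitePlace K)) (s : SL(2, K)) :
    ConjContinuous (elementaryIn K) s := by
  refine .of_upper_of_weyl (fun x k hk => ?_) (fun k hk => ⟨k, hk, ?_⟩) s
  · obtain ⟨l, hl, hlower⟩ :=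
      exists_forall_natCast_mul_mem_of_span_rat_eq_top (span_lowerConj_eq_top hK x hk)
    refine ⟨k * l, Nat.mul_pos hk hl, ?_⟩
    rintro _ ⟨e, he, rfl⟩
    refine conj_mem_of_mem_elementary (incl K) ?_ he
    rintro _ ⟨r, rfl⟩
    constructor
    · rw [incl_upper, ← upper_add, add_comm, upper_add, mul_inv_cancel_right]
      exact upper_mem_elementaryIn ⟨l * r, by simp [mul_assoc]⟩
    · have hmem := mem_lowerConj.1 (hlower (k * r))
      rwa [incl_lower, Nat.cast_mul, mul_comm (k : 𝓞 K), mul_assoc (l : 𝓞 K), map_mul,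
        map_natCast]
  · rintro _ ⟨e, he, rfl⟩
    refine conj_mem_of_mem_elementary (incl K) ?_ he
    rintro _ ⟨r, rfl⟩
    rw [incl_upper, incl_lower, weyl_conj_upper, weyl_conj_lower]
    exact ⟨lower_mem_elementaryIn ⟨-r, by simp⟩, upper_mem_elementaryIn ⟨-r, by simp⟩⟩

end NumberField

/-! ### Approximation modulo an integer -/

section CommRing

variable {R S : Type*} [CommRing R] [CommRing S]

lemma isCoprime_of_forall_maximal {x y : R}
    (h : ∀ P : Ideal R, P.IsMaximal → y ∈ P → x ∉ P) : IsCoprime x y := by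
  rw [← Ideal.isCoprime_span_singleton_iff, Ideal.isCoprime_iff_sup_eq]
  by_contra hne
  obtain ⟨P, hP, hle⟩ := Ideal.exists_le_maximal _ hne
  exact h P hP (hle (Ideal.mem_sup_right (Ideal.mem_span_singleton_self y)))
    (hle (Ideal.mem_sup_left (Ideal.mem_span_singleton_self x)))

lemma isUnit_mk_span_singleton_iff {x n : R} :
    IsUnit (Ideal.Quotient.mk (Ideal.span {n}) x) ↔ IsCoprime x n := by
  have mk_eq_one_iff (y : R) : Ideal.Quotient.mk (Ideal.span {n}) y = 1 ↔ n ∣ y - 1 := by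
    rw [← map_one (Ideal.Quotient.mk (Ideal.span {n})), Ideal.Quotient.eq,
      Ideal.mem_span_singleton]
  constructor
  · intro h
    obtain ⟨w, hw⟩ := h.exists_right_inv
    obtain ⟨v, rfl⟩ := Ideal.Quotient.mk_surjective w
    obtain ⟨t, ht⟩ := (mk_eq_one_iff _).1 ((map_mul _ _ _).trans hw)
    exact ⟨v, -t, by linear_combination ht⟩
  · rintro ⟨u, v, huv⟩
    refine IsUnit.of_mul_eq_one (Ideal.Quotient.mk _ u) ?_
    rw [← map_mul, mk_eq_one_iff]
    exact ⟨-v, by linear_combination huv⟩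

lemma mem_elementary_of_isUnit {q : R} {g : SL(2, R)} (hu : IsUnit (g 0 0))
    (h00 : q ^ 2 ∣ g 0 0 - 1) (h01 : q ∣ g 0 1) (h10 : q ∣ g 1 0) : g ∈ elementary q := by
  obtain ⟨u, hu⟩ := hu
  rw [← hu] at h00
  have hg : g = lower (g 1 0 * ((u⁻¹ : Rˣ) : R)) * diag u * upper (((u⁻¹ : Rˣ) : R) * g 0 1) := by
    have hdet := det_eq_one g
    rw [← hu] at hdet
    apply ext_entries <;> simp [← hu]
    linear_combination ((u⁻¹ : Rˣ) : R) * hdet - g 1 1 * u.mul_inv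
  rw [hg]
  exact mul_mem (mul_mem (lower_mem_elementary (h10.mul_right _)) (diag_mem_elementary h00))
    (upper_mem_elementary (h01.mul_left _))

lemma exists_mem_elementary_map_eq {f : R →+* S} (hf : Function.Surjective f) {q : R}
    {e : SL(2, S)} (he : e ∈ elementary (f q)) :
    ∃ e' ∈ elementary q, Matrix.SpecialLinearGroup.map f e' = e := by
  suffices h : elementary (f q) ≤ (elementary q).map (Matrix.SpecialLinearGroup.map f) from h he
  rw [elementary_le_iff]
  rintro _ ⟨z, rfl⟩
  obtain ⟨y, rfl⟩ := hf z
  exact ⟨⟨upper (q * y), upper_mem_elementary (dvd_mul_right _ _), by apply ext_entries <;> simp⟩,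
    ⟨lower (q * y), lower_mem_elementary (dvd_mul_right _ _), by apply ext_entries <;> simp⟩⟩

end CommRing

section IsDedekindDomain

variable {R : Type*} [CommRing R] [IsDedekindDomain R]

-- The Chinese remainder theorem gives `s ≡ 1` modulo the primes over `m` containing `b`,
-- and `s ≡ 0` modulo the others.
lemma exists_isCoprime_add_mul {a b m : R} (h : IsCoprime a b) (hm : m ≠ 0) :
    ∃ s : R, IsCoprime (b + a * s) m := by
  classical
  have hfin := Ideal.finite_factors (R := R) (I := Ideal.span {m}) (by simpa using hm)
  obtain ⟨s, hs⟩ := IsDedekindDomain.exists_forall_sub_mem_ideal (s := hfin.toFinset)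
    IsDedekindDomain.HeightOneSpectrum.asIdeal (fun _ => 1) (fun v _ => v.prime)
    (fun v _ w _ hvw h => hvw (IsDedekindDomain.HeightOneSpectrum.ext h))
    (fun v => if b ∈ v.1.asIdeal then 1 else 0)
  refine ⟨s, isCoprime_of_forall_maximal fun P hP hmP hx => ?_⟩
  have hP0 : P ≠ ⊥ := by
    rintro rfl
    exact hm (by simpa using hmP)
  have hsP : s - (if b ∈ P then 1 else 0) ∈ P := by
    simpa using hs ⟨P, hP.isPrime, hP0⟩ (hfin.mem_toFinset.2 (Ideal.dvd_span_singleton.2 hmP))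
  by_cases hb : b ∈ P
  · rw [if_pos hb] at hsP
    have ha : a ∈ P := by
      have e : a = (b + a * s) - b - a * (s - 1) := by ring
      rw [e]
      exact P.sub_mem (P.sub_mem hx hb) (P.mul_mem_left _ hsP)
    obtain ⟨c, d, hcd⟩ := h
    exact hP.ne_top (P.eq_top_iff_one.2 (hcd ▸ P.add_mem (P.mul_mem_left _ ha)
      (P.mul_mem_left _ hb)))
  · rw [if_neg hb, sub_zero] at hsP
    exact hb ((P.add_mem_iff_left (P.mul_mem_left a hsP)).1 hx)

lemma exists_isUnit_mk_mul_lower {q n : R} (hn : n ≠ 0) {g : SL(2, R)}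
    (hg : g ∈ principal (q ^ 2)) :
    ∃ t : R, IsUnit (Ideal.Quotient.mk (Ideal.span {n}) ((g * lower (q * t)) 0 0)) := by
  obtain ⟨⟨a, ha⟩, -, -, -⟩ := mem_principal.1 hg
  have hcop : IsCoprime (g 0 1 * q) (g 0 0) :=
    IsCoprime.mul_left ⟨-g 1 0, g 1 1, by linear_combination det_eq_one g⟩
      ⟨-(q * a), 1, by linear_combination ha⟩
  obtain ⟨t, ht⟩ := exists_isCoprime_add_mul hcop hn
  refine ⟨t, isUnit_mk_span_singleton_iff.2 ?_⟩
  simpa [mul_assoc] using ht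

lemma exists_mul_mem_principal {q n : R} (hn : n ≠ 0) {g : SL(2, R)}
    (hg : g ∈ principal (q ^ 2)) : ∃ e ∈ elementary q, g * e ∈ principal n := by
  obtain ⟨t, hu⟩ := exists_isUnit_mk_mul_lower hn hg
  obtain ⟨h00, h01, h10, -⟩ := mem_principal.1 hg
  have hq : q ∣ q ^ 2 := dvd_pow_self q two_ne_zero
  set g' := g * lower (q * t) with hg'
  let π := Ideal.Quotient.mk (Ideal.span {n})
  have hmem : Matrix.SpecialLinearGroup.map π g' ∈ elementary (π q) := by
    refine mem_elementary_of_isUnit hu ?_ ?_ ?_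
    · change π q ^ 2 ∣ π (g' 0 0) - 1
      rw [← map_one π, ← map_sub, ← map_pow]
      have e : g' 0 0 - 1 = g 0 0 - 1 + g 0 1 * (q * t) := by simp [hg']; ring
      exact map_dvd π (e ▸ dvd_add h00 (h01.mul_right _))
    · change π q ∣ π (g' 0 1)
      have e : g' 0 1 = g 0 1 := by simp [hg']
      exact map_dvd π (e ▸ hq.trans h01)
    · change π q ∣ π (g' 1 0)
      have e : g' 1 0 = g 1 0 + q * (g 1 1 * t) := by simp [hg']; ring
      exact map_dvd π (e ▸ dvd_add (hq.trans h10) (dvd_mul_right _ _))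
  obtain ⟨e, he, hee⟩ := exists_mem_elementary_map_eq Ideal.Quotient.mk_surjective hmem
  refine ⟨lower (q * t) * e⁻¹, mul_mem (lower_mem_elementary (dvd_mul_right _ _)) (inv_mem he), ?_⟩
  rw [principal, MonoidHom.mem_ker, ← mul_assoc, map_mul, map_inv, hee, mul_inv_cancel]

end IsDedekindDomain

lemma exists_eq_mul_dvd_pow_coprime (n q : ℕ) (hn : n ≠ 0) :
    ∃ a b j : ℕ, n = a * b ∧ a ∣ q ^ j ∧ b.Coprime q := by
  induction n using Nat.strong_induction_on with
  | _ n ih =>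
    by_cases hg : n.gcd q = 1
    · exact ⟨1, n, 0, by simp, by simp, hg⟩
    · obtain ⟨m, hm⟩ := Nat.gcd_dvd_left n q
      have hm0 : m ≠ 0 := by
        rintro rfl
        exact hn (by rw [hm, mul_zero])
      have hlt : m < n := by
        have := Nat.gcd_pos_of_pos_left q (Nat.pos_of_ne_zero hn)
        nlinarith [(by omega : 2 ≤ n.gcd q), Nat.pos_of_ne_zero hm0]
      obtain ⟨a, b, j, hab, ha, hb⟩ := ih m hlt hm0
      exact ⟨n.gcd q * a, b, j + 1, by rw [mul_assoc, ← hab]; exact hm,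
        pow_succ' q j ▸ Nat.mul_dvd_mul (Nat.gcd_dvd_right _ _) ha, hb⟩

/-- The polynomial `∏_{i < d} (x ^ d - x ^ i)`, which at a prime `x` is the order of `GL_d(𝔽_x)`. -/
def glOrder (d : ℕ) (x : ℤ) : ℤ := ∏ i ∈ Finset.range d, (x ^ d - x ^ i)

lemma glOrder_natCast_eq_card (d p : ℕ) [Fact p.Prime] :
    glOrder d p = Nat.card (GL (Fin d) (ZMod p)) := by
  rw [Matrix.card_GL_field, ZMod.card, glOrder,
    ← Fin.prod_univ_eq_prod_range (fun i => ((p : ℤ) ^ d - (p : ℤ) ^ i)), Nat.cast_prod]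
  refine Finset.prod_congr rfl fun i _ => ?_
  rw [Nat.cast_sub (Nat.pow_le_pow_right (Fact.out : p.Prime).pos i.2.le)]
  push_cast
  rfl

lemma glOrder_congr {d : ℕ} {n x y : ℤ} (h : x ≡ y [ZMOD n]) :
    glOrder d x ≡ glOrder d y [ZMOD n] :=
  Int.ModEq.prod fun _ _ => (h.pow _).sub (h.pow _)

lemma dvd_glOrder_of_mul_modEq_one {d : ℕ} {t x y : ℤ} (h : x * y ≡ 1 [ZMOD t])
    (hy : t ∣ glOrder d y) : t ∣ glOrder d x := by
  have hxy : glOrder d x ≡ glOrder d y * ∏ i ∈ Finset.range d, (-(x ^ (d + i))) [ZMOD t] := by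
    unfold glOrder
    rw [← Finset.prod_mul_distrib]
    refine Int.ModEq.prod fun i _ => ?_
    have e : (y ^ d - y ^ i) * -(x ^ (d + i)) = (x * y) ^ i * x ^ d - (x * y) ^ d * x ^ i := by
      ring
    rw [e]
    simpa using (((h.pow i).mul_right (x ^ d)).sub ((h.pow d).mul_right (x ^ i))).symm
  exact hxy.dvd_iff.2 (hy.mul_right _)

lemma glOrder_ne_zero {d : ℕ} {x : ℤ} (hx : 2 ≤ x) : glOrder d x ≠ 0 :=
  Finset.prod_ne_zero_iff.2 fun _ hi =>
    (sub_pos.2 (pow_lt_pow_right₀ (by omega : 1 < x) (Finset.mem_range.1 hi))).ne'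

section FreeOverInt

variable {R : Type*} [CommRing R]

lemma intCast_dvd_of_dvd_leftMulMatrix {ι : Type*} [Fintype ι] [DecidableEq ι]
    (b : Module.Basis ι ℤ R) {n : ℤ} {y : R}
    (h : ∀ i j, n ∣ Algebra.leftMulMatrix b y i j) : (n : R) ∣ y := by
  have hb : ∀ j, (n : R) ∣ y * b j := fun j => by
    rw [← b.sum_repr (y * b j)]
    refine Finset.dvd_sum fun i _ => ?_
    rw [← Algebra.leftMulMatrix_eq_repr_mul, zsmul_eq_mul]
    exact (map_dvd (Int.castRingHom R) (h i j)).mul_right _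
  rw [← mul_one y, ← b.sum_repr 1, Finset.mul_sum]
  refine Finset.dvd_sum fun j _ => ?_
  rw [mul_smul_comm, zsmul_eq_mul]
  exact (hb j).mul_left _

-- `R / p` acts faithfully on a `d`-dimensional vector space over `𝔽_p`, so its unit group
-- embeds into `GL_d(𝔽_p)`.
lemma natCast_dvd_pow_glOrder_sub_one [Module.Free ℤ R] [Module.Finite ℤ R] {p : ℕ}
    (hp : p.Prime) {x : R} (h : IsCoprime x (p : R)) :
    (p : R) ∣ x ^ (glOrder (Module.finrank ℤ R) p).natAbs - 1 := by
  have : Fact p.Prime := ⟨hp⟩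
  let b := Module.finBasis ℤ R
  let Φ : R →+* Matrix (Fin (Module.finrank ℤ R)) (Fin (Module.finrank ℤ R)) (ZMod p) :=
    ((Int.castRingHom (ZMod p)).mapMatrix).comp (Algebra.leftMulMatrix b).toRingHom
  have hker : ∀ y : R, Φ y = 0 → (p : R) ∣ y := fun y hy => by
    rw [← Int.cast_natCast]
    exact intCast_dvd_of_dvd_leftMulMatrix b fun i j =>
      (ZMod.intCast_zmod_eq_zero_iff_dvd _ p).1 (congrArg (fun m => m i j) hy)
  have hΦp : Φ (p : R) = 0 := by rw [map_natCast, ← Matrix.diagonal_natCast]; simp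
  obtain ⟨s, t, hst⟩ := h
  have hsx : Φ s * Φ x = 1 := by
    rw [← map_mul, ← map_one Φ, ← hst, map_add, map_mul Φ t, hΦp, mul_zero, add_zero]
  have hxs : Φ x * Φ s = 1 := by rw [← map_mul, mul_comm, map_mul, hsx]
  let u : GL (Fin (Module.finrank ℤ R)) (ZMod p) := ⟨Φ x, Φ s, hxs, hsx⟩
  have hu : u ^ (glOrder (Module.finrank ℤ R) p).natAbs = 1 := by
    rw [glOrder_natCast_eq_card, Int.natAbs_natCast]
    exact pow_card_eq_one'
  refine hker _ ?_
  rw [map_sub, map_pow, map_one, sub_eq_zero]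
  exact congrArg Units.val hu

end FreeOverInt

/-! ### Rows with a rational integer modulo the second entry -/

section CommRing

variable {R : Type*} [CommRing R]

lemma isCoprime_of_dvd_sub {x y z : R} (h : IsCoprime x y) (hz : y ∣ z - x) : IsCoprime z y := by
  obtain ⟨w, hw⟩ := hz
  rw [sub_eq_iff_eq_add'.1 hw]
  exact h.add_mul_left_left w

lemma intCast_notMem_of_not_dvd {P : Ideal R} (hP : P ≠ ⊤) {p : ℕ} (hp : p.Prime)
    (hpP : (p : R) ∈ P) {n : ℤ} (hn : ¬ (p : ℤ) ∣ n) : (n : R) ∉ P := by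
  intro hmem
  obtain ⟨x, y, hxy⟩ := (Nat.prime_iff_prime_int.1 hp).coprime_iff_not_dvd.2 hn
  refine hP (P.eq_top_iff_one.2 ?_)
  have hxy' : (x : R) * p + y * n = 1 := by simpa using congrArg (Int.cast (R := R)) hxy
  rw [← hxy']
  exact P.add_mem (P.mul_mem_left _ hpP) (P.mul_mem_left _ hmem)

lemma exists_intCast_dvd_sub_of_mem_adjoin {β γ z : R} {i : ℤ} (hγ : β ∣ γ - i)
    (hz : z ∈ Algebra.adjoin ℤ {γ}) : ∃ j : ℤ, β ∣ z - j := by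
  rw [Algebra.adjoin_singleton_eq_range_aeval] at hz
  obtain ⟨p, rfl⟩ := hz
  refine ⟨p.eval i, hγ.trans ?_⟩
  have h := Polynomial.sub_dvd_eval_sub γ (i : R) (p.map (Int.castRingHom R))
  rwa [Polynomial.eval_map, Polynomial.eval_intCast_map, eq_intCast] at h

end CommRing

section NumberField

variable {K : Type*} [Field K] [NumberField K]

local notation "ι" => algebraMap (𝓞 K) K

lemma exists_dvd_natCast {a : 𝓞 K} (ha : a ≠ 0) : ∃ A : ℕ, A ≠ 0 ∧ a ∣ (A : 𝓞 K) :=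
  ⟨Ideal.absNorm (Ideal.span {a}),
    by rwa [Ne, Ideal.absNorm_eq_zero_iff, Ideal.span_singleton_eq_bot],
    Ideal.mem_span_singleton.1 (Ideal.absNorm_mem _)⟩

lemma not_isUnit_natCast {n : ℕ} (hn : n ≠ 1) : ¬ IsUnit (n : 𝓞 K) := by
  intro h
  have hn' : IsUnit (algebraMap ℤ (𝓞 K) n) := by simpa using h
  exact hn (Nat.isUnit_iff.1 (Int.ofNat_isUnit.1 (isUnit_of_map_unit _ _ hn')))

lemma card_maximal_le_finrank {p : ℕ} (hp : p.Prime) {T : Finset (Ideal (𝓞 K))}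
    (hT : ∀ P ∈ T, P.IsMaximal ∧ (p : 𝓞 K) ∈ P) : T.card ≤ Module.finrank ℤ (𝓞 K) := by
  have hne : ∀ P ∈ T, P ≠ ⊥ := by
    rintro P hP rfl
    exact hp.ne_zero (Nat.cast_eq_zero.1 (Ideal.mem_bot.1 (hT _ hP).2))
  have hprod : ∏ P ∈ T, P ∣ Ideal.span {(p : 𝓞 K)} :=
    Finset.prod_primes_dvd _
      (fun P hP => (Ideal.prime_iff_isPrime (hne P hP)).2 (hT P hP).1.isPrime)
      fun P hP => Ideal.dvd_span_singleton.2 (hT P hP).2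
  have hnorm : ∏ P ∈ T, Ideal.absNorm P ∣ p ^ Module.finrank ℤ (𝓞 K) := by
    rw [← Ideal.absNorm_span_natCast, ← map_prod]
    exact map_dvd _ hprod
  have hle : ∀ P ∈ T, p ≤ Ideal.absNorm P := by
    intro P hP
    obtain ⟨j, -, hj⟩ := (Nat.dvd_prime_pow hp).1 ((Finset.dvd_prod_of_mem _ hP).trans hnorm)
    rw [hj]
    refine Nat.le_self_pow ?_ p
    rintro rfl
    rw [pow_zero, Ideal.absNorm_eq_one_iff] at hj
    exact (hT P hP).1.ne_top hj
  refine (Nat.pow_le_pow_iff_right hp.one_lt).1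
    (le_trans ?_ (Nat.le_of_dvd (Nat.pow_pos hp.pos) hnorm))
  rw [← Finset.prod_const]
  exact Finset.prod_le_prod' hle

-- Each of the at most `d` primes above `p` excludes at most one of the residues `0, …, d` of `j`.
lemma exists_isCoprime_add_mul_prime {a b : 𝓞 K} (h : IsCoprime a b) {p : ℕ} (hp : p.Prime)
    (hlt : Module.finrank ℤ (𝓞 K) < p) {y : ℕ} (hy : ¬ p ∣ y) :
    ∃ j : ℕ, IsCoprime (b + (y * j : ℕ) * a) (p : 𝓞 K) := by
  classical
  set d := Module.finrank ℤ (𝓞 K)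
  by_contra! hcon
  have hbad : ∀ j : ℕ, ∃ P : Ideal (𝓞 K), P.IsMaximal ∧ (p : 𝓞 K) ∈ P ∧
      b + (y * j : ℕ) * a ∈ P := by
    intro j
    by_contra! hno
    exact hcon j (isCoprime_of_forall_maximal hno)
  choose P hPmax hpP hmem using hbad
  have hcard : ((Finset.range (d + 1)).image P).card < (Finset.range (d + 1)).card := by
    rw [Finset.card_range, Nat.lt_succ_iff]
    refine card_maximal_le_finrank hp fun Q hQ => ?_
    obtain ⟨j, -, rfl⟩ := Finset.mem_image.1 hQ
    exact ⟨hPmax j, hpP j⟩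
  obtain ⟨i, hi, j, hj, hij, hPij⟩ := Finset.exists_ne_map_eq_of_card_lt_of_maps_to hcard
    fun x hx => Finset.mem_image_of_mem P hx
  have hnd : ¬ (p : ℤ) ∣ (y : ℤ) * (i - j) := by
    rw [(Nat.prime_iff_prime_int.1 hp).dvd_mul, Int.natCast_dvd_natCast]
    rintro (h | h)
    · exact hy h
    · rw [Finset.mem_range] at hi hj
      have := Int.eq_zero_of_abs_lt_dvd h (by rw [abs_lt]; constructor <;> omega)
      omega
  have hdiff : (((y : ℤ) * (i - j) : ℤ) : 𝓞 K) * a ∈ P i := by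
    convert (P i).sub_mem (hmem i) (hPij ▸ hmem j) using 1
    push_cast
    ring
  have ha : a ∈ P i := ((hPmax i).isPrime.mem_or_mem hdiff).resolve_left
    (intCast_notMem_of_not_dvd (hPmax i).ne_top hp (hpP i) hnd)
  have hb : b ∈ P i := ((P i).add_mem_iff_left ((P i).mul_mem_left _ ha)).1 (hmem i)
  obtain ⟨u, v, huv⟩ := h
  exact (hPmax i).ne_top ((P i).eq_top_iff_one.2 (huv ▸ (P i).add_mem
    ((P i).mul_mem_left _ ha) ((P i).mul_mem_left _ hb)))

lemma exists_isCoprime_add_natCast_mul {a b : 𝓞 K} (h : IsCoprime a b) {e : ℕ}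
    (hfe : (Module.finrank ℤ (𝓞 K)).factorial ∣ e) (hbe : IsCoprime b (e : 𝓞 K)) {D : ℕ}
    (hD : D ≠ 0) : ∃ m : ℕ, e ∣ m ∧ IsCoprime (b + m * a) (D : 𝓞 K) := by
  induction D using induction_on_primes with
  | zero => exact absurd rfl hD
  | one => exact ⟨0, dvd_zero _, by simpa using isCoprime_one_right⟩
  | prime_mul p D hp ih =>
    obtain ⟨m, hm, hmD⟩ := ih (right_ne_zero_of_mul hD)
    by_cases hpD : p ∣ D
    · refine ⟨m, hm, ?_⟩
      push_cast
      exact (hmD.of_isCoprime_of_dvd_right (Nat.cast_dvd_cast hpD)).mul_right hmD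
    by_cases hpe : p ∣ e
    · refine ⟨m, hm, ?_⟩
      push_cast
      refine .mul_right (.of_isCoprime_of_dvd_right ?_ (Nat.cast_dvd_cast hpe)) hmD
      refine isCoprime_of_dvd_sub hbe ?_
      rw [add_sub_cancel_left]
      exact (Nat.cast_dvd_cast hm).mul_right a
    have hpd : Module.finrank ℤ (𝓞 K) < p := by
      by_contra! hle
      exact hpe ((hp.dvd_factorial.2 hle).trans hfe)
    obtain ⟨j, hj⟩ := exists_isCoprime_add_mul_prime (a := a) (b := b + (m : 𝓞 K) * a) (y := e * D)
      (h.add_mul_right_right (m : 𝓞 K)) hp hpd (by rw [hp.dvd_mul]; tauto)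
    refine ⟨m + e * D * j, dvd_add hm ⟨D * j, by ring⟩, ?_⟩
    have e₁ : b + (m + e * D * j : ℕ) * a = b + m * a + (e * D * j : ℕ) * a := by push_cast; ring
    rw [e₁, Nat.cast_mul p]
    refine hj.mul_right (isCoprime_of_dvd_sub hmD ?_)
    rw [add_sub_cancel_left]
    exact ⟨(e : 𝓞 K) * j * a, by push_cast; ring⟩

open IntermediateField in
lemma exists_natCast_mul_mem_adjoin {γ : 𝓞 K} (hγ : ℚ⟮ι γ⟯ = ⊤) (a : 𝓞 K) :
    ∃ D : ℕ, D ≠ 0 ∧ (D : 𝓞 K) * a ∈ Algebra.adjoin ℤ {γ} := by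
  obtain ⟨p, hp⟩ : ι a ∈ (Polynomial.aeval (R := ℚ) (ι γ)).range := by
    rw [← Algebra.adjoin_singleton_eq_range_aeval,
      ← adjoin_simple_toSubalgebra_of_isAlgebraic (Algebra.IsAlgebraic.isAlgebraic (ι γ)), hγ]
    trivial
  obtain ⟨b, hb0, hb⟩ := IsLocalization.integerNormalization_spec (nonZeroDivisors ℤ) p
  set q := IsLocalization.integerNormalization (nonZeroDivisors ℤ) p
  have hba : (b : 𝓞 K) * a = Polynomial.aeval γ q := by
    apply RingOfIntegers.coe_injective
    have h := congrArg (Polynomial.aeval (ι γ)) hb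
    rw [Polynomial.aeval_map_algebraMap, Polynomial.aeval_algebraMap_apply, map_zsmul] at h
    rw [h, zsmul_eq_mul, map_mul, map_intCast]
    exact congrArg _ hp.symm
  refine ⟨b.natAbs, Int.natAbs_ne_zero.2 (nonZeroDivisors.ne_zero hb0), ?_⟩
  have hmem : (b : 𝓞 K) * a ∈ Algebra.adjoin ℤ {γ} :=
    hba ▸ Polynomial.aeval_mem_adjoin_singleton ℤ γ
  rcases Int.natAbs_eq b with h | h
  · rwa [h, Int.cast_natCast] at hmem
  · rw [h, Int.cast_neg, neg_mul, Int.cast_natCast] at hmem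
    exact neg_mem_iff.1 hmem

open IntermediateField in
lemma exists_primitive_add_mul (x : 𝓞 K) {y : ℕ} (hy : y ≠ 0) :
    ∃ c : 𝓞 K, ℚ⟮ι (x + y * c)⟯ = ⊤ := by
  have hprim := Field.exists_primitive_element ℚ K
  have : Finite (IntermediateField ℚ K) :=
    Field.finite_intermediateField_of_exists_primitive_element ℚ K hprim
  obtain ⟨θ', hθ'⟩ := hprim
  obtain ⟨N, hN, θ, hθ⟩ := exists_natCast_mul_eq_algebraMap θ'
  obtain ⟨t, t', htt, h⟩ := Finite.exists_ne_map_eq_of_infinite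
    (fun t : ℕ => ℚ⟮ι (x + y * (t * θ))⟯)
  refine ⟨t * θ, ?_⟩
  have hmem : ι (x + y * (t * θ)) ∈ ℚ⟮ι (x + y * (t * θ))⟯ := mem_adjoin_simple_self ℚ _
  have hmem' : ι (x + y * (t' * θ)) ∈ ℚ⟮ι (x + y * (t * θ))⟯ :=
    h ▸ mem_adjoin_simple_self ℚ _
  rw [eq_top_iff, ← hθ', adjoin_simple_le_iff]
  generalize ℚ⟮ι (x + y * (t * θ))⟯ = F at hmem hmem'
  have hne : (y : K) * ((t : K) - t') * N ≠ 0 :=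
    mul_ne_zero (mul_ne_zero (Nat.cast_ne_zero.2 hy) (sub_ne_zero.2 (Nat.cast_injective.ne htt)))
      (Nat.cast_ne_zero.2 (by omega))
  have e : θ' = ((y : K) * ((t : K) - t') * N)⁻¹ *
      (ι (x + y * (t * θ)) - ι (x + y * (t' * θ))) := by
    rw [eq_inv_mul_iff_mul_eq₀ hne]
    simp only [map_add, map_mul, map_natCast, ← hθ]
    ring
  rw [e]
  refine F.mul_mem (F.inv_mem (F.mul_mem (F.mul_mem ?_ (F.sub_mem ?_ ?_)) ?_))
    (F.sub_mem hmem hmem') <;> exact _root_.natCast_mem F _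

lemma exists_natCast_dvd_sub {a β : 𝓞 K} (hβ : β ≠ 0) {D : ℕ} (hD : IsCoprime (D : 𝓞 K) β)
    {i : ℤ} (h : β ∣ D * a - i) : ∃ α : ℕ, β ∣ a - α := by
  have := finite_quotient_span_singleton hβ
  obtain ⟨j, hj, hDj⟩ := exists_dvd_pow_sub_one hD
  obtain ⟨B, hB, hβB⟩ := exists_dvd_natCast hβ
  set z : ℤ := D ^ (j - 1) * i
  have haz : β ∣ a - z := by
    have e : a - z = D ^ (j - 1) * (D * a - i) - (D ^ j - 1) * a := by
      rw [← Nat.sub_one_add_one hj.ne', pow_succ]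
      push_cast [z]
      ring
    exact e ▸ dvd_sub (h.mul_left _) (hDj.mul_right _)
  refine ⟨(z % B).toNat, ?_⟩
  have hα : (((z % B).toNat : ℤ) : 𝓞 K) = z - B * (z / B : ℤ) := by
    rw [Int.toNat_of_nonneg (Int.emod_nonneg _ (Nat.cast_ne_zero.2 hB)), Int.emod_def]
    push_cast
    ring
  rw [Int.cast_natCast] at hα
  rw [hα, ← sub_add]
  exact dvd_add haz (hβB.mul_right _)

lemma exists_dvd_natCast_coprime {β : 𝓞 K} (hβ : β ≠ 0) {q : ℕ} (h : IsCoprime β (q : 𝓞 K)) :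
    ∃ B : ℕ, B ≠ 0 ∧ β ∣ (B : 𝓞 K) ∧ B.Coprime q := by
  obtain ⟨N, hN, hβN⟩ := exists_dvd_natCast hβ
  obtain ⟨A, B, l, rfl, hA, hB⟩ := exists_eq_mul_dvd_pow_coprime N q hN
  refine ⟨B, right_ne_zero_of_mul hN, ?_, hB⟩
  rw [Nat.cast_mul] at hβN
  refine IsCoprime.dvd_of_dvd_mul_left (h.pow_right (n := l) |>.of_isCoprime_of_dvd_right ?_) hβN
  exact_mod_cast Nat.cast_dvd_cast (α := 𝓞 K) hA

-- If `a' * b₀` is primitive, where `a ∣ A = a * a'`, then modulo `β = b₀ + m * a` with `m ∈ ℤ` it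
-- is the integer `-m * A`. So all of `ℤ[a' * b₀]`, which contains a multiple of `a`, consists of
-- integers modulo `β`.
lemma exists_natCast_dvd_sub_of_isCoprime {a b : 𝓞 K} (h : IsCoprime a b) (ha : a ≠ 0) {n : ℕ}
    (hn : n ≠ 0) : ∃ (s : 𝓞 K) (α : ℕ), b + a * s ≠ 0 ∧ IsCoprime (b + a * s) (n : 𝓞 K) ∧
      b + a * s ∣ a - α := by
  set e := n * (Module.finrank ℤ (𝓞 K)).factorial
  have he0 : e ≠ 0 := mul_ne_zero hn (Nat.factorial_ne_zero _)
  obtain ⟨s₀, hs₀⟩ := exists_isCoprime_add_mul h (Nat.cast_ne_zero (R := 𝓞 K).2 he0)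
  obtain ⟨A, hA, a', ha'⟩ := exists_dvd_natCast ha
  obtain ⟨c, hc⟩ := exists_primitive_add_mul (a' * (b + a * s₀)) (mul_ne_zero hA he0)
  set b₀ := b + a * (s₀ + e * c) with hb₀
  have hγ : a' * (b + a * s₀) + ((A * e : ℕ) : 𝓞 K) * c = a' * b₀ := by
    push_cast
    rw [ha', hb₀]
    ring
  rw [hγ] at hc
  obtain ⟨D, hD, hDmem⟩ := exists_natCast_mul_mem_adjoin hc a
  have hab₀ : IsCoprime a b₀ := h.add_mul_left_right _
  have hb₀e : IsCoprime b₀ (e : 𝓞 K) :=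
    isCoprime_of_dvd_sub hs₀ ⟨a * c, by rw [hb₀]; ring⟩
  obtain ⟨m, hem, hmD⟩ := exists_isCoprime_add_natCast_mul hab₀ (Dvd.intro_left n rfl) hb₀e
    (mul_ne_zero two_ne_zero hD)
  refine ⟨s₀ + e * c + m, ?_⟩
  have hβ : b + a * (s₀ + e * c + m) = b₀ + m * a := by rw [hb₀]; ring
  rw [hβ]
  set β := b₀ + m * a
  have hβ0 : β ≠ 0 := by
    intro h0
    have h2 : IsCoprime β 2 := hmD.of_isCoprime_of_dvd_right ⟨D, by push_cast; ring⟩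
    rw [h0, isCoprime_zero_left] at h2
    exact not_isUnit_natCast (by decide : 2 ≠ 1) (by exact_mod_cast h2)
  have hβe : IsCoprime β (e : 𝓞 K) :=
    isCoprime_of_dvd_sub hb₀e (by
      rw [add_sub_cancel_left]
      exact (Nat.cast_dvd_cast hem).mul_right a)
  have hβγ : β ∣ a' * b₀ - (-(m * A : ℕ) : ℤ) := ⟨a', by push_cast [β]; rw [ha']; ring⟩
  obtain ⟨i, hi⟩ := exists_intCast_dvd_sub_of_mem_adjoin hβγ hDmem
  obtain ⟨α, hα⟩ := exists_natCast_dvd_sub hβ0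
    (hmD.of_isCoprime_of_dvd_right ⟨2, by push_cast; ring⟩).symm hi
  exact ⟨α, hβ0, hβe.of_isCoprime_of_dvd_right (Nat.cast_dvd_cast (Dvd.intro _ rfl)), hα⟩

lemma exists_natCast_row {a b : 𝓞 K} (h : IsCoprime a b) (ha : a ≠ 0) {n : ℕ} (hn : n ≠ 0) :
    ∃ (s : 𝓞 K) (B α : ℕ), B ≠ 0 ∧ b + a * s ∣ (B : 𝓞 K) ∧ b + a * s ∣ a - α ∧
      B.Coprime n ∧ α.Coprime B := by
  obtain ⟨s, α, hβ0, hβn, hα⟩ := exists_natCast_dvd_sub_of_isCoprime h ha hn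
  have hβα : IsCoprime (b + a * s) (α : 𝓞 K) :=
    (isCoprime_of_dvd_sub (h.add_mul_left_right s) ((dvd_sub_comm).1 hα)).symm
  obtain ⟨B, hB, hβB, hcop⟩ := exists_dvd_natCast_coprime (q := n * α) hβ0
    (by push_cast; exact hβn.mul_right hβα)
  exact ⟨s, B, α, hB, hβB, hα, hcop.coprime_dvd_right (Dvd.intro _ rfl),
    (hcop.coprime_dvd_right (Dvd.intro_left _ rfl)).symm⟩

end NumberField

/-! ### Comparison of the two completions, and Dirichlet's theorem -/

section KernelSequence

open Filter

variable {K : Type*} [Field K]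

/-- Sequences in `SL₂(K)` that are Cauchy for the topology defined by the groups `elementaryIn K k`,
and tend to `1` for the congruence topology. They represent elements of the kernel of the map from
the completion for the first topology to the completion for the second. -/
def IsKernelSeq (c : ℕ → SL(2, K)) : Prop :=
  (∀ k, 1 ≤ k → ∃ N, ∀ n ≥ N, (c N)⁻¹ * c n ∈ elementaryIn K k) ∧
    ∀ k, 1 ≤ k → ∀ᶠ n in atTop, c n ∈ principalIn K k

variable [NumberField K]

lemma IsKernelSeq.conj (hK : 1 < Fintype.card (InfinitePlace K)) {c : ℕ → SL(2, K)}
    (hc : IsKernelSeq c) (s : SL(2, K)) : IsKernelSeq fun n => s * c n * s⁻¹ := by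
  constructor
  · intro k hk
    obtain ⟨k', hk', h⟩ := conjContinuous_elementaryIn hK s k hk
    obtain ⟨N, hN⟩ := hc.1 k' hk'
    refine ⟨N, fun n hn => ?_⟩
    have e : (s * c N * s⁻¹)⁻¹ * (s * c n * s⁻¹) = s * ((c N)⁻¹ * c n) * s⁻¹ := by group
    exact e ▸ h _ (hN n hn)
  · intro k hk
    obtain ⟨k', hk', h⟩ := conjContinuous_principalIn s k hk
    filter_upwards [hc.2 k' hk'] with n hn using h _ hn

/-- The elements of `SL₂(K)` that commute, in the limit, with all the sequences in `IsKernelSeq`. -/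
def kernelCentralizer (hK : 1 < Fintype.card (InfinitePlace K)) : Subgroup SL(2, K) where
  carrier := {t | ∀ c : ℕ → SL(2, K), IsKernelSeq c → ∀ k, 1 ≤ k →
    ∀ᶠ n in atTop, (c n)⁻¹ * t * c n * t⁻¹ ∈ elementaryIn K k}
  one_mem' := fun c _ k _ => .of_forall fun n => by simp [one_mem]
  mul_mem' := by
    intro t t' ht ht' c hc k hk
    obtain ⟨k', hk', h⟩ := conjContinuous_elementaryIn hK t k hk
    filter_upwards [ht c hc k hk, ht' c hc k' hk'] with n hn hn'
    have e : (c n)⁻¹ * (t * t') * c n * (t * t')⁻¹ =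
        (c n)⁻¹ * t * c n * t⁻¹ * (t * ((c n)⁻¹ * t' * c n * t'⁻¹) * t⁻¹) := by group
    exact e ▸ mul_mem hn (h _ hn')
  inv_mem' := by
    intro t ht c hc k hk
    obtain ⟨k', hk', h⟩ := conjContinuous_elementaryIn hK t⁻¹ k hk
    filter_upwards [ht c hc k' hk'] with n hn
    have e : (c n)⁻¹ * t⁻¹ * c n * t⁻¹⁻¹ =
        (t⁻¹ * ((c n)⁻¹ * t * c n * t⁻¹) * t⁻¹⁻¹)⁻¹ := by group
    exact e ▸ inv_mem (h _ hn)

lemma mem_kernelCentralizer {hK : 1 < Fintype.card (InfinitePlace K)} {t : SL(2, K)} :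
    t ∈ kernelCentralizer hK ↔ ∀ c : ℕ → SL(2, K), IsKernelSeq c → ∀ k, 1 ≤ k →
      ∀ᶠ n in atTop, (c n)⁻¹ * t * c n * t⁻¹ ∈ elementaryIn K k := Iff.rfl

instance kernelCentralizer_normal (hK : 1 < Fintype.card (InfinitePlace K)) :
    (kernelCentralizer hK).Normal := by
  refine ⟨fun t ht s c hc k hk => ?_⟩
  obtain ⟨k', hk', h⟩ := conjContinuous_elementaryIn hK s k hk
  filter_upwards [ht _ (hc.conj hK s⁻¹) k' hk'] with n hn
  have e : (c n)⁻¹ * (s * t * s⁻¹) * c n * (s * t * s⁻¹)⁻¹ =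
      s * ((s⁻¹ * c n * s⁻¹⁻¹)⁻¹ * t * (s⁻¹ * c n * s⁻¹⁻¹) * t⁻¹) * s⁻¹ := by group
  exact e ▸ h _ hn

lemma exists_seq_inv_mul_mem_elementary {level : ℕ → 𝓞 K} (h0 : ∀ n, level n ≠ 0)
    (hdvd : ∀ n, level n ∣ level (n + 1)) {g : SL(2, 𝓞 K)} (hg : g ∈ principal (level 0 ^ 2)) :
    ∃ c : ℕ → SL(2, 𝓞 K), c 0 = g ∧ (∀ n, c n ∈ principal (level n ^ 2)) ∧
      ∀ n m, n ≤ m → (c n)⁻¹ * c m ∈ elementary (level n) := by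
  have exists_next (n : ℕ) (g : principal (level n ^ 2)) : ∃ h : principal (level (n + 1) ^ 2),
      (g : SL(2, 𝓞 K))⁻¹ * h ∈ elementary (level n) := by
    obtain ⟨e, he, hge⟩ := exists_mul_mem_principal (pow_ne_zero 2 (h0 (n + 1))) g.2
    exact ⟨⟨_, hge⟩, by simpa using he⟩
  choose next hnext using exists_next
  let c : ∀ n, principal (level n ^ 2) := fun n => Nat.rec ⟨g, hg⟩ next n
  refine ⟨fun n => (c n).1, rfl, fun n => (c n).2, fun n m hnm => ?_⟩
  beta_reduce
  induction m, hnm using Nat.le_induction with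
  | base => simp [one_mem]
  | succ m hm ih =>
    rw [← mul_inv_cancel_left (c m).1 (c (m + 1)).1, ← mul_assoc]
    exact mul_mem ih (elementary_anti
      (Nat.rel_of_forall_rel_succ_of_le (· ∣ ·) hdvd hm) (hnext m (c m)))

open Nat in
lemma exists_isKernelSeq {k : ℕ} (hk : 1 ≤ k) {g : SL(2, 𝓞 K)}
    (hg : g ∈ principal ((k : 𝓞 K) ^ 2)) :
    ∃ c : ℕ → SL(2, 𝓞 K), IsKernelSeq (fun n => incl K (c n)) ∧
      ∀ n, g⁻¹ * c n ∈ elementary (k : 𝓞 K) := by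
  have level_dvd (n : ℕ) : ((k * n ! : ℕ) : 𝓞 K) ∣ (k * (n + 1)! : ℕ) :=
    Nat.cast_dvd_cast (Nat.mul_dvd_mul_left k (Nat.factorial_dvd_factorial n.le_succ))
  have dvd_level {l n : ℕ} (hl : 1 ≤ l) (h : l ≤ n) : (l : 𝓞 K) ∣ (k * n ! : ℕ) :=
    Nat.cast_dvd_cast ((Nat.dvd_factorial hl h).mul_left k)
  obtain ⟨c, rfl, hc, he⟩ := exists_seq_inv_mul_mem_elementary
    (fun n => Nat.cast_ne_zero.2 (by positivity)) level_dvd (g := g) (by simpa using hg)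
  refine ⟨c, ⟨fun l hl => ⟨l, fun n hn => ?_⟩, fun l hl => ?_⟩, fun n => ?_⟩
  · rw [← map_inv, ← map_mul, incl_mem_elementaryIn]
    exact elementary_anti (dvd_level hl le_rfl) (he l n hn)
  · filter_upwards [eventually_ge_atTop l] with n hn
    rw [incl_mem_principalIn]
    exact principal_anti ((dvd_level hl hn).trans (dvd_pow_self _ two_ne_zero)) (hc n)
  · simpa using he 0 n n.zero_le

end KernelSequence

section Primes

lemma exists_prime_gt_modEq {m n : ℕ} (hm : m ≠ 0) (hn : n ≠ 0) (hmn : m.Coprime n) {x y : ℤ}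
    (hx : IsCoprime x m) (hy : IsCoprime y n) (N : ℕ) :
    ∃ p : ℕ, N < p ∧ p.Prime ∧ p ≡ x [ZMOD m] ∧ p ≡ y [ZMOD n] := by
  have : NeZero (m * n) := ⟨mul_ne_zero hm hn⟩
  let e := ZMod.chineseRemainder hmn
  have hu : IsUnit (e.symm ((x : ZMod m), (y : ZMod n))) := (Prod.isUnit_iff.2
    ⟨(ZMod.coe_int_isUnit_iff_isCoprime _ _).2 hx.symm,
      (ZMod.coe_int_isUnit_iff_isCoprime _ _).2 hy.symm⟩).map e.symm
  obtain ⟨p, hpN, hp, hpz⟩ := Nat.forall_exists_prime_gt_and_eq_mod hu N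
  have hpxy : ((p : ZMod m), (p : ZMod n)) = ((x : ZMod m), (y : ZMod n)) := by
    rw [← e.apply_symm_apply ((x : ZMod m), (y : ZMod n)), ← hpz, map_natCast]
    rfl
  rw [Prod.mk.injEq] at hpxy
  refine ⟨p, hpN, hp, ?_, ?_⟩ <;> rw [← ZMod.intCast_eq_intCast_iff, Int.cast_natCast]
  exacts [hpxy.1, hpxy.2]

lemma isCoprime_of_mul_modEq_one {x y n : ℤ} (h : x * y ≡ 1 [ZMOD n]) : IsCoprime x n := by
  obtain ⟨t, ht⟩ := h.dvd
  exact ⟨y, t, by linear_combination -ht⟩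

lemma exists_primes_mul_modEq {m B : ℕ} (hm : m ≠ 0) (hB : B ≠ 0) (hmB : m.Coprime B) {α x y : ℤ}
    (hα : IsCoprime α B) (hxy : x * y ≡ 1 [ZMOD m]) :
    ∃ p₁ p₂ : ℕ, p₁.Prime ∧ p₂.Prime ∧ p₁ < p₂ ∧ p₁ ≡ x [ZMOD m] ∧ p₂ ≡ y [ZMOD m] ∧
      p₁ * p₂ ≡ α [ZMOD B] := by
  obtain ⟨p₁, -, hp₁, hx, h₁⟩ := exists_prime_gt_modEq hm hB hmB (isCoprime_of_mul_modEq_one hxy)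
    isCoprime_one_left 0
  obtain ⟨p₂, hlt, hp₂, hy, h₂⟩ := exists_prime_gt_modEq hm hB hmB
    (isCoprime_of_mul_modEq_one (mul_comm x y ▸ hxy)) hα p₁
  exact ⟨p₁, p₂, hp₁, hp₂, hlt, hx, hy, by simpa using h₁.mul h₂⟩

end Primes

section CommRing

variable {R : Type*} [CommRing R]

lemma natCast_dvd_sub_of_modEq {n : ℕ} {x y : ℤ} (h : x ≡ y [ZMOD n]) : (n : R) ∣ x - y := by
  have hdvd := map_dvd (Int.castRingHom R) h.symm.dvd
  simpa using hdvd

lemma exists_diag_conj_eq {q : R} {g : SL(2, R)} (hg : g ∈ principal q) {v : Rˣ}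
    (hv : g 0 0 ∣ (v : R) ^ 2 - 1) :
    ∃ e₁ ∈ elementary q, ∃ e₂ ∈ elementary q, (diag v)⁻¹ * g * diag v = e₁ * g * e₂ := by
  obtain ⟨t, ht⟩ := hv
  obtain ⟨b, hb⟩ := (mem_principal.1 hg).2.1
  have hwv : ((v⁻¹ : Rˣ) : R) * v = 1 := by simp
  set w := ((v⁻¹ : Rˣ) : R) with hw
  have hdvd : q ∣ q * (-(w ^ 2 * t * b)) := dvd_mul_right _ _
  obtain ⟨s, hqs, hs⟩ := exists_lower_mul_of_row_eq (q := q) (g := (diag v)⁻¹ * g * diag v)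
    (h := g * upper (q * (-(w ^ 2 * t * b))))
    (by simpa using (principal_normal q).conj_mem g hg (diag v)⁻¹)
    (mul_mem hg (upper_mem_principal hdvd))
    (by
      simp [← diag_inv, ← hw]
      linear_combination g 0 0 * hwv)
    (by
      simp [← diag_inv, ← hw, hb]
      linear_combination (-(q * b * w ^ 2)) * ht + q * b * (w * v + 1) * hwv)
  exact ⟨_, lower_mem_elementary hqs, _, upper_mem_elementary hdvd, by rw [hs, ← mul_assoc]⟩

lemma exists_mul_apply_zero_zero_eq {q b s x : R} {g : SL(2, R)} (hb : g 0 1 = q ^ 2 * b)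
    (hx : q ^ 2 * (q * b + g 0 0 * s) ∣ x - g 0 0) : ∃ e ∈ elementary q, (g * e) 0 0 = x := by
  obtain ⟨r, hr⟩ := hx
  refine ⟨upper (q * s) * lower (q * r), mul_mem (upper_mem_elementary (dvd_mul_right _ _))
    (lower_mem_elementary (dvd_mul_right _ _)), ?_⟩
  simp [hb]
  linear_combination -hr

end CommRing

section NumberField

variable {K : Type*} [Field K] [NumberField K]

lemma ne_zero_of_dvd_sub_one {q : ℕ} (hq : q ≠ 1) {a : 𝓞 K} (ha : (q : 𝓞 K) ∣ a - 1) :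
    a ≠ 0 := by
  rintro rfl
  rw [zero_sub, dvd_neg] at ha
  exact not_isUnit_natCast hq (isUnit_of_dvd_one ha)

-- If the row is normalized to `(a, β)` by `exists_natCast_row`, the primes can be chosen
-- congruent to `1` and to `α` modulo `B`.
lemma exists_mul_apply_zero_zero_eq_primes {q : ℕ} (hq : q ≠ 0) (h2q : 2 ∣ q) {g : SL(2, 𝓞 K)}
    (hg : g ∈ principal ((q : 𝓞 K) ^ 2)) {x y : ℤ} (hxy : x * y ≡ 1 [ZMOD (q ^ 2 : ℕ)]) :
    ∃ p₁ p₂ : ℕ, p₁.Prime ∧ p₂.Prime ∧ p₁ < p₂ ∧ p₁ ≡ x [ZMOD (q ^ 2 : ℕ)] ∧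
      p₂ ≡ y [ZMOD (q ^ 2 : ℕ)] ∧ ∃ e ∈ elementary (q : 𝓞 K), (g * e) 0 0 = (p₁ * p₂ : ℕ) := by
  obtain ⟨h00, ⟨b, hb⟩, -, -⟩ := mem_principal.1 hg
  have hcop : IsCoprime (g 0 0) (q * b) :=
    ⟨g 1 1, -(q * g 1 0), by linear_combination det_eq_one g + g 1 0 * hb⟩
  obtain ⟨s, B, α, hB, hβB, hβα, hBq, hαB⟩ := exists_natCast_row hcop
    (ne_zero_of_dvd_sub_one (by omega : q ≠ 1) ((dvd_pow_self _ two_ne_zero).trans h00)) hq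
  have hqB : (q ^ 2).Coprime B := hBq.symm.pow_left 2
  obtain ⟨p₁, p₂, hp₁, hp₂, hlt, hx, hy, hα⟩ := exists_primes_mul_modEq (pow_ne_zero 2 hq) hB hqB
    (Nat.isCoprime_iff_coprime.2 hαB) hxy
  refine ⟨p₁, p₂, hp₁, hp₂, hlt, hx, hy,
    exists_mul_apply_zero_zero_eq (s := s) hb (IsCoprime.mul_dvd ?_ ?_ ?_)⟩
  · have := hqB.cast (R := 𝓞 K)
    rw [Nat.cast_pow] at this
    exact this.of_isCoprime_of_dvd_right hβB
  · have := natCast_dvd_sub_of_modEq (R := 𝓞 K) ((hx.mul hy).trans hxy)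
    push_cast at this ⊢
    simpa using dvd_sub this h00
  · have := hβB.trans (natCast_dvd_sub_of_modEq hα)
    push_cast at this ⊢
    simpa using dvd_sub this hβα

end NumberField

/-! ### The kernel is central -/

section Commutators

/-- The exponents `j` for which `g` and `t ^ j` commute modulo `H`. -/
def commExponents {G : Type*} [Group G] {H : Subgroup G} {t : G}
    (ht : t ∈ Subgroup.normalizer (H : Set G)) (g : G) : AddSubgroup ℤ where
  carrier := {j | g⁻¹ * t ^ j * g * (t ^ j)⁻¹ ∈ H}
  zero_mem' := by simp [one_mem]
  add_mem' := by
    intro i j hi hj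
    have hj' := (Subgroup.mem_normalizer_iff.1 (zpow_mem ht i) _).1 hj
    have e : g⁻¹ * t ^ (i + j) * g * (t ^ (i + j))⁻¹ =
        g⁻¹ * t ^ i * g * (t ^ i)⁻¹ * (t ^ i * (g⁻¹ * t ^ j * g * (t ^ j)⁻¹) * (t ^ i)⁻¹) := by
      group
    rw [Set.mem_ofPred_eq, e]
    exact mul_mem hi hj'
  neg_mem' := by
    intro i hi
    have hi' := inv_mem ((Subgroup.mem_normalizer_iff.1 (zpow_mem ht (-i)) _).1 hi)
    have e : g⁻¹ * t ^ (-i) * g * (t ^ (-i))⁻¹ =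
        (t ^ (-i) * (g⁻¹ * t ^ i * g * (t ^ i)⁻¹) * (t ^ (-i))⁻¹)⁻¹ := by group
    rw [Set.mem_ofPred_eq, e]
    exact hi'

section Group

variable {G : Type*} [Group G] {H : Subgroup G} {t : G} {ht : t ∈ Subgroup.normalizer (H : Set G)}

lemma mem_commExponents {g : G} {j : ℤ} :
    j ∈ commExponents ht g ↔ g⁻¹ * t ^ j * g * (t ^ j)⁻¹ ∈ H := Iff.rfl

lemma mem_commExponents_mul {g e : G} (he : e ∈ H) {j : ℤ} (hj : j ∈ commExponents ht g) :
    j ∈ commExponents ht (g * e) := by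
  rw [mem_commExponents] at hj ⊢
  have e' : (g * e)⁻¹ * t ^ j * (g * e) * (t ^ j)⁻¹ =
      e⁻¹ * (g⁻¹ * t ^ j * g * (t ^ j)⁻¹) * (t ^ j * e * (t ^ j)⁻¹) := by group
  exact e' ▸ mul_mem (mul_mem (inv_mem he) hj)
    ((Subgroup.mem_normalizer_iff.1 (zpow_mem ht j) _).1 he)

end Group

variable {R : Type*} [CommRing R]

lemma diag_mem_normalizer_elementary (u : Rˣ) (q : R) :
    diag u ∈ Subgroup.normalizer (elementary q : Set SL(2, R)) := by
  refine Subgroup.mem_normalizer_iff.2 fun e => ⟨diag_conj_mem_elementary u, fun he => ?_⟩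
  have h := diag_conj_mem_elementary u⁻¹ he
  rw [diag_inv] at h
  simpa [mul_assoc] using h

lemma diag_commutator_mem_elementary {q q₁ : R} (hq : q₁ ∣ q) {g e : SL(2, R)}
    (hg : g ∈ principal q) (he : e ∈ elementary q)
    (hconj : ∀ e ∈ elementary q, g⁻¹ * e * g ∈ elementary q₁) {v : Rˣ}
    (hv : (g * e) 0 0 ∣ (v : R) ^ 2 - 1) :
    g⁻¹ * (diag v)⁻¹ * g * diag v ∈ elementary q₁ := by
  obtain ⟨e₁, he₁, e₂, he₂, heq⟩ :=
    exists_diag_conj_eq (mul_mem hg (elementary_le_principal q he)) hv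
  have he' : (diag v)⁻¹ * e * diag v ∈ elementary q := by
    simpa [diag_inv] using diag_conj_mem_elementary v⁻¹ he
  have hmem := mul_mem (hconj _ he₁)
    (elementary_anti hq (mul_mem (mul_mem he he₂) (inv_mem he')))
  have e' : g⁻¹ * (diag v)⁻¹ * g * diag v =
      g⁻¹ * e₁ * g * (e * e₂ * ((diag v)⁻¹ * e * diag v)⁻¹) := by
    calc g⁻¹ * (diag v)⁻¹ * g * diag v
        = g⁻¹ * ((diag v)⁻¹ * (g * e) * diag v) * ((diag v)⁻¹ * e * diag v)⁻¹ := by group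
      _ = _ := by rw [heq]; group
  exact e' ▸ hmem

lemma eq_top_of_diag_mem {F : Type*} [Field F] {N : Subgroup SL(2, F)} (hN : N.Normal) {v : Fˣ}
    (hv : v ^ 2 ≠ 1) (hmem : diag v ∈ N) : N = ⊤ := by
  have hv' : (v : F) ^ 2 - 1 ≠ 0 := by
    rwa [sub_ne_zero, ← Units.val_pow_eq_pow_val, ne_eq, Units.val_eq_one]
  have hupper (x : F) : upper x ∈ N := by
    have hcomm := mul_mem hmem
      (hN.conj_mem _ (inv_mem hmem) (upper (x / ((v : F) ^ 2 - 1))))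
    rw [← mul_assoc, ← mul_assoc, diag_conj_upper, ← upper_neg, ← upper_add] at hcomm
    convert hcomm using 2
    field_simp
    ring
  have hlower (x : F) : lower x ∈ N := by
    simpa [weyl_conj_upper] using hN.conj_mem _ (hupper (-x)) (weyl F)
  exact (Subgroup.eq_top_iff' N).2 (upper_lower_induction hupper hlower fun _ _ => mul_mem)

end Commutators

section DiagExponent

lemma dvd_glOrder_sq {d : ℕ} {P r t x y : ℤ} (hx : x ≡ r [ZMOD P]) (hxy : x * y ≡ 1 [ZMOD P])
    (ht : t ∣ P) (h : t ∣ glOrder d x * glOrder d y) : t ∣ glOrder d r ^ 2 := by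
  obtain ⟨t₁, t₂, h₁, h₂, rfl⟩ := exists_dvd_and_dvd_of_dvd_mul h
  have hr₁ : t₁ ∣ glOrder d r :=
    (glOrder_congr (hx.of_dvd ((Dvd.intro _ rfl).trans ht))).dvd_iff.1 h₁
  have hr₂ : t₂ ∣ glOrder d r := dvd_glOrder_of_mul_modEq_one
    (((hx.symm.mul_right y).trans hxy).of_dvd ((Dvd.intro_left _ rfl).trans ht)) h₂
  exact sq (glOrder d r) ▸ mul_dvd_mul hr₁ hr₂

/-- The exponent `m` for which `diag (w ^ m)` is shown to be in `kernelCentralizer`, for all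
units `w`. The residues `3` and `2` are those prescribed modulo the 2-part and the odd part of
the level. -/
def diagExponent (d : ℕ) : ℤ := glOrder d 3 ^ 2 * glOrder d 2 ^ 2

lemma diagExponent_ne_zero (d : ℕ) : diagExponent d ≠ 0 :=
  mul_ne_zero (pow_ne_zero _ (glOrder_ne_zero (by norm_num)))
    (pow_ne_zero _ (glOrder_ne_zero (by norm_num)))

lemma exists_modEq_three_modEq_two {n : ℕ} (hn : n ≠ 0) : ∃ (P m : ℕ) (x y : ℤ), n = P * m ∧
    x ≡ 3 [ZMOD P] ∧ x ≡ 2 [ZMOD m] ∧ x * y ≡ 1 [ZMOD n] := by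
  obtain ⟨P, m, j, rfl, hP, hm⟩ := exists_eq_mul_dvd_pow_coprime n 2 hn
  have hPm : P.Coprime m := (hm.pow_right j).symm.coprime_dvd_left hP
  have h3P : Nat.Coprime 3 P := .coprime_dvd_right hP (.pow_right j (by norm_num))
  obtain ⟨x, hxP, hxm⟩ := Nat.chineseRemainder hPm 3 2
  have hx : x.Coprime (P * m) := .mul_right (hxP.gcd_eq.trans h3P) (hxm.gcd_eq.trans hm.symm)
  obtain ⟨y, z, hyz⟩ := Nat.isCoprime_iff_coprime.2 hx
  refine ⟨P, m, x, y, rfl, Int.natCast_modEq_iff.2 hxP, Int.natCast_modEq_iff.2 hxm, ?_⟩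
  exact Int.modEq_iff_dvd.2 ⟨z, by linear_combination -hyz⟩

lemma mem_of_gcd_dvd {J : AddSubgroup ℤ} {a b n : ℤ} (ha : a ∈ J) (hb : b ∈ J)
    (h : (Int.gcd a b : ℤ) ∣ n) : n ∈ J := by
  obtain ⟨t, rfl⟩ := h
  rw [Int.gcd_eq_gcd_ab, mul_comm, mul_comm a, mul_comm b]
  exact zsmul_mem (add_mem (zsmul_mem ha _) (zsmul_mem hb _)) t

-- A first exponent `n₁` comes from arbitrary residues, a second one from residues prescribed
-- modulo a multiple of `n₁`. The greatest common divisor of both divides `diagExponent d`.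
lemma diagExponent_mem_of_forall_exists {d l : ℕ} (hl : l ≠ 0) {J : AddSubgroup ℤ}
    (h : ∀ q : ℕ, q ≠ 0 → l ∣ q → ∀ x y : ℤ, x * y ≡ 1 [ZMOD (q ^ 2 : ℕ)] → ∃ p₁ p₂ : ℤ,
      2 ≤ p₁ ∧ 2 ≤ p₂ ∧ p₁ ≡ x [ZMOD (q ^ 2 : ℕ)] ∧ p₂ ≡ y [ZMOD (q ^ 2 : ℕ)] ∧
        glOrder d p₁ * glOrder d p₂ ∈ J) : diagExponent d ∈ J := by
  obtain ⟨p₁, p₂, hp₁, hp₂, -, -, hJ⟩ := h l hl dvd_rfl 1 1 (by simp)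
  have hn : glOrder d p₁ * glOrder d p₂ ≠ 0 :=
    mul_ne_zero (glOrder_ne_zero hp₁) (glOrder_ne_zero hp₂)
  set n₁ := glOrder d p₁ * glOrder d p₂
  have hq : l * n₁.natAbs ≠ 0 := mul_ne_zero hl (Int.natAbs_ne_zero.2 hn)
  have hn₁q : n₁ ∣ ((l * n₁.natAbs) ^ 2 : ℕ) := by
    push_cast
    exact ((dvd_abs n₁ n₁).2 dvd_rfl).mul_left _ |>.trans (dvd_pow_self _ two_ne_zero)
  obtain ⟨P, m, x, y, hPm, hx3, hx2, hxy⟩ := exists_modEq_three_modEq_two (pow_ne_zero 2 hq)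
  obtain ⟨q₁, q₂, -, -, hq₁, hq₂, hJ'⟩ := h _ hq (Dvd.intro _ rfl) x y hxy
  have hq₁₂ := (hq₁.mul hq₂).trans hxy
  rw [hPm, Nat.cast_mul] at hn₁q hq₁ hq₁₂
  refine mem_of_gcd_dvd hJ hJ' ?_
  obtain ⟨t₁, t₂, ht₁, ht₂, ht⟩ :=
    exists_dvd_and_dvd_of_dvd_mul ((Int.gcd_dvd_left n₁ (glOrder d q₁ * glOrder d q₂)).trans hn₁q)
  have hgcd := Int.gcd_dvd_right n₁ (glOrder d q₁ * glOrder d q₂)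
  rw [ht] at hgcd ⊢
  exact mul_dvd_mul
    (dvd_glOrder_sq ((hq₁.of_dvd (Dvd.intro _ rfl)).trans hx3) (hq₁₂.of_dvd (Dvd.intro _ rfl)) ht₁
      ((Dvd.intro _ rfl).trans hgcd))
    (dvd_glOrder_sq ((hq₁.of_dvd (Dvd.intro_left _ rfl)).trans hx2)
      (hq₁₂.of_dvd (Dvd.intro_left _ rfl)) ht₂ ((Dvd.intro_left _ rfl).trans hgcd))

lemma dvd_pow_natAbs_mul_sub_one {R : Type*} [CommRing R] {x a b : R} {m n : ℤ}
    (hab : IsCoprime a b) (ha : a ∣ x ^ m.natAbs - 1) (hb : b ∣ x ^ n.natAbs - 1) :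
    a * b ∣ x ^ (m * n).natAbs - 1 := by
  rw [Int.natAbs_mul]
  refine hab.mul_dvd (ha.trans (pow_one_sub_dvd_pow_mul_sub_one x _ _)) (hb.trans ?_)
  rw [mul_comm]
  exact pow_one_sub_dvd_pow_mul_sub_one x _ _

end DiagExponent

section NumberField

open Filter

variable {K : Type*} [Field K]

local notation "ι" => algebraMap (𝓞 K) K

lemma incl_diag_mem_normalizer_elementaryIn (u : (𝓞 K)ˣ) (k : ℕ) :
    incl K (diag u) ∈ Subgroup.normalizer (elementaryIn K k : Set SL(2, K)) :=
  Subgroup.le_normalizer_map (incl K) ⟨_, diag_mem_normalizer_elementary u (k : 𝓞 K), rfl⟩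

variable [NumberField K]

lemma exists_primes_glOrder_mul_mem_commExponents (w : (𝓞 K)ˣ) {k q : ℕ} (hq : q ≠ 0)
    (h2q : 2 ∣ q) (hkq : k ∣ q) {δ : SL(2, 𝓞 K)} (hδ : δ ∈ principal ((q : 𝓞 K) ^ 2))
    (hconj : ∀ e ∈ elementary (q : 𝓞 K), δ⁻¹ * e * δ ∈ elementary (k : 𝓞 K)) {x y : ℤ}
    (hxy : x * y ≡ 1 [ZMOD (q ^ 2 : ℕ)]) :
    ∃ p₁ p₂ : ℕ, p₁.Prime ∧ p₂.Prime ∧ p₁ ≡ x [ZMOD (q ^ 2 : ℕ)] ∧ p₂ ≡ y [ZMOD (q ^ 2 : ℕ)] ∧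
      glOrder (Module.finrank ℤ (𝓞 K)) p₁ * glOrder (Module.finrank ℤ (𝓞 K)) p₂ ∈
        commExponents (diag_mem_normalizer_elementary w (k : 𝓞 K)) δ := by
  obtain ⟨p₁, p₂, hp₁, hp₂, hlt, hx, hy, e, he, hrow⟩ :=
    exists_mul_apply_zero_zero_eq_primes hq h2q hδ hxy
  refine ⟨p₁, p₂, hp₁, hp₂, hx, hy, ?_⟩
  set j := glOrder (Module.finrank ℤ (𝓞 K)) p₁ * glOrder (Module.finrank ℤ (𝓞 K)) p₂
  have hcop : IsCoprime (p₁ : 𝓞 K) p₂ := ((Nat.coprime_primes hp₁ hp₂).2 hlt.ne).cast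
  have hdvd : (δ * e) 0 0 ∣ ((w ^ j.natAbs : (𝓞 K)ˣ) : 𝓞 K) ^ 2 - 1 := by
    rw [hrow, ← Units.val_pow_eq_pow_val, pow_right_comm, Units.val_pow_eq_pow_val, Nat.cast_mul]
    exact dvd_pow_natAbs_mul_sub_one hcop
      (natCast_dvd_pow_glOrder_sub_one hp₁ (isCoprime_unit (w ^ 2) _))
      (natCast_dvd_pow_glOrder_sub_one hp₂ (isCoprime_unit (w ^ 2) _))
  have hmem := diag_commutator_mem_elementary (Nat.cast_dvd_cast hkq)
    (principal_anti (dvd_pow_self _ two_ne_zero) hδ) he hconj hdvd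
  have hneg : -(j.natAbs : ℤ) ∈ commExponents (diag_mem_normalizer_elementary w (k : 𝓞 K)) δ := by
    rwa [mem_commExponents, zpow_neg, zpow_natCast, inv_inv, ← diag_pow]
  rcases Int.natAbs_eq j with h | h <;> rw [h]
  · simpa using neg_mem hneg
  · exact hneg

lemma IsKernelSeq.exists_forall_exists_glOrder_mul_mem (hK : 1 < Fintype.card (InfinitePlace K))
    {c : ℕ → SL(2, K)} (hc : IsKernelSeq c) (w : (𝓞 K)ˣ) {k N : ℕ} (hk : 1 ≤ k)
    (hN : ∀ n ≥ N, (c N)⁻¹ * c n ∈ elementaryIn K k) :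
    ∃ l : ℕ, l ≠ 0 ∧ ∀ q : ℕ, q ≠ 0 → l ∣ q → ∀ x y : ℤ, x * y ≡ 1 [ZMOD (q ^ 2 : ℕ)] →
      ∃ p₁ p₂ : ℤ, 2 ≤ p₁ ∧ 2 ≤ p₂ ∧ p₁ ≡ x [ZMOD (q ^ 2 : ℕ)] ∧ p₂ ≡ y [ZMOD (q ^ 2 : ℕ)] ∧
        glOrder (Module.finrank ℤ (𝓞 K)) p₁ * glOrder (Module.finrank ℤ (𝓞 K)) p₂ ∈
          commExponents (incl_diag_mem_normalizer_elementaryIn w k) (c N) := by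
  obtain ⟨k', hk', hconj⟩ := conjContinuous_elementaryIn hK (c N)⁻¹ k hk
  refine ⟨2 * (k * k'), by positivity, fun q hq hlq x y hxy => ?_⟩
  have hkk' : k * k' ∣ q := (Dvd.intro_left _ rfl).trans hlq
  obtain ⟨n, ⟨δ, hδ, hδc⟩, hn⟩ := ((hc.2 (q ^ 2) (Nat.pow_pos (Nat.pos_of_ne_zero hq))).and
    (eventually_ge_atTop N)).exists
  have hcN := hN n hn
  rw [← hδc] at hcN
  have hδconj (e : SL(2, 𝓞 K)) (he : e ∈ elementary (q : 𝓞 K)) :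
      δ⁻¹ * e * δ ∈ elementary (k : 𝓞 K) := by
    have h := hconj _ (elementaryIn_anti ((Dvd.intro_left _ rfl).trans hkk')
      (incl_mem_elementaryIn.2 he))
    rw [← incl_mem_elementaryIn, map_mul, map_mul, map_inv]
    have e' : (incl K δ)⁻¹ * incl K e * incl K δ = ((c N)⁻¹ * incl K δ)⁻¹ *
        ((c N)⁻¹ * incl K e * (c N)⁻¹⁻¹) * ((c N)⁻¹ * incl K δ) := by group
    exact e' ▸ mul_mem (mul_mem (inv_mem hcN) h) hcN
  obtain ⟨p₁, p₂, hp₁, hp₂, hx, hy, hmem⟩ :=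
    exists_primes_glOrder_mul_mem_commExponents w hq ((Dvd.intro _ rfl).trans hlq)
      ((Dvd.intro _ rfl).trans hkk') (by simpa using hδ) hδconj hxy
  refine ⟨p₁, p₂, mod_cast hp₁.two_le, mod_cast hp₂.two_le, hx, hy, ?_⟩
  rw [← mul_inv_cancel_left (incl K δ) (c N)]
  refine mem_commExponents_mul (by simpa using inv_mem hcN) ?_
  rw [mem_commExponents, ← incl_mem_elementaryIn] at hmem
  simpa only [mem_commExponents, map_mul, map_inv, map_zpow] using hmem

lemma incl_diag_zpow_mem_kernelCentralizer (hK : 1 < Fintype.card (InfinitePlace K))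
    (w : (𝓞 K)ˣ) :
    incl K (diag w) ^ diagExponent (Module.finrank ℤ (𝓞 K)) ∈ kernelCentralizer hK := by
  intro c hc k hk
  obtain ⟨N, hN⟩ := hc.1 k hk
  obtain ⟨l, hl, hex⟩ := hc.exists_forall_exists_glOrder_mul_mem hK w hk hN
  filter_upwards [eventually_ge_atTop N] with n hn
  have hmem := mem_commExponents_mul (hN n hn) (diagExponent_mem_of_forall_exists hl hex)
  rwa [mul_inv_cancel_left, mem_commExponents] at hmem

lemma kernelCentralizer_eq_top (hK : 1 < Fintype.card (InfinitePlace K)) :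
    kernelCentralizer hK = ⊤ := by
  obtain ⟨w, hw⟩ := exists_unit_not_isOfFinOrder hK
  have hmem := incl_diag_zpow_mem_kernelCentralizer hK w
  rw [← map_zpow, ← diag_zpow, incl_diag] at hmem
  refine eq_top_of_diag_mem (kernelCentralizer_normal hK) (fun h => ?_) hmem
  have hinj : Function.Injective (Units.map (algebraMap (𝓞 K) K : 𝓞 K →* K)) :=
    Units.map_injective RingOfIntegers.coe_injective
  rw [← map_pow, map_eq_one_iff _ hinj, ← zpow_natCast, ← zpow_mul] at h
  exact hw (isOfFinOrder_iff_zpow_eq_one.2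
    ⟨_, mul_ne_zero (diagExponent_ne_zero _) (by norm_num), h⟩)

lemma eventually_commutator_mem_elementaryIn (hK : 1 < Fintype.card (InfinitePlace K))
    {c : ℕ → SL(2, K)} (hc : IsKernelSeq c) (t : SL(2, K)) {k : ℕ} (hk : 1 ≤ k) :
    ∀ᶠ n in atTop, (c n)⁻¹ * t * c n * t⁻¹ ∈ elementaryIn K k :=
  mem_kernelCentralizer.1 (kernelCentralizer_eq_top hK ▸ Subgroup.mem_top t) c hc k hk

lemma exists_commutator_mem_elementary (hK : 1 < Fintype.card (InfinitePlace K)) {k : ℕ}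
    (hk : 1 ≤ k) {γ : SL(2, 𝓞 K)} (hγ : γ ∈ principal ((k : 𝓞 K) ^ 2)) (δ : SL(2, 𝓞 K)) :
    ∃ c, γ⁻¹ * c ∈ elementary (k : 𝓞 K) ∧ c⁻¹ * δ * c * δ⁻¹ ∈ elementary (k : 𝓞 K) := by
  obtain ⟨c, hc, h⟩ := exists_isKernelSeq hk hγ
  obtain ⟨n, hn⟩ := (eventually_commutator_mem_elementaryIn hK hc (incl K δ) hk).exists
  simp only [← map_inv, ← map_mul] at hn
  exact ⟨c n, h n, incl_mem_elementaryIn.1 hn⟩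

lemma principal_conj_mem_elementary (hK : 1 < Fintype.card (InfinitePlace K)) {k : ℕ}
    (hk : 1 ≤ k) {γ : SL(2, 𝓞 K)} (hγ : γ ∈ principal ((k : 𝓞 K) ^ 2)) {e : SL(2, 𝓞 K)}
    (he : e ∈ elementary (k : 𝓞 K)) : γ⁻¹ * e * γ ∈ elementary (k : 𝓞 K) := by
  obtain ⟨c, hγc, hc⟩ := exists_commutator_mem_elementary hK hk hγ e
  have e' : γ⁻¹ * e * γ = γ⁻¹ * c * (c⁻¹ * e * c * e⁻¹ * e) * (γ⁻¹ * c)⁻¹ := by group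
  exact e' ▸ mul_mem (mul_mem hγc (mul_mem hc he)) (inv_mem hγc)

lemma principal_commutator_mem_elementary (hK : 1 < Fintype.card (InfinitePlace K)) {k : ℕ}
    (hk : 1 ≤ k) {γ δ : SL(2, 𝓞 K)} (hγ : γ ∈ principal ((k : 𝓞 K) ^ 2))
    (hδ : δ ∈ principal ((k : 𝓞 K) ^ 2)) : γ⁻¹ * δ * γ * δ⁻¹ ∈ elementary (k : 𝓞 K) := by
  obtain ⟨c, hγc, hc⟩ := exists_commutator_mem_elementary hK hk hγ δ
  have hconj := principal_conj_mem_elementary hK hk (inv_mem hδ) hγc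
  have e' : γ⁻¹ * δ * γ * δ⁻¹ =
      γ⁻¹ * c * (c⁻¹ * δ * c * δ⁻¹) * (δ⁻¹⁻¹ * (γ⁻¹ * c) * δ⁻¹)⁻¹ := by group
  exact e' ▸ mul_mem (mul_mem hγc hc) (inv_mem hconj)

lemma diag_commutator_mem_elementaryIn (hK : 1 < Fintype.card (InfinitePlace K)) {k X : ℕ}
    (hk : 1 ≤ k) (hX : 1 ≤ X) {x : 𝓞 K} (hx : x ∣ (X : 𝓞 K)) {u : Kˣ} (hu : (u : K) = ι x)
    {δ : SL(2, 𝓞 K)} (hδ : δ ∈ principal ((k * X ^ 2 : ℕ) ^ 2 : 𝓞 K)) :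
    (incl K δ)⁻¹ * diag u * incl K δ * (diag u)⁻¹ ∈ elementaryIn K k := by
  obtain ⟨c, hc, h⟩ := exists_isKernelSeq (Nat.mul_pos hk (Nat.pow_pos hX)) hδ
  obtain ⟨n, hn⟩ := (eventually_commutator_mem_elementaryIn hK hc (diag u) hk).exists
  obtain ⟨y, hy⟩ := hx
  have hy' : (X : K) = ι x * ι y := by rw [← map_mul, ← hy, map_natCast]
  have hu' : ((u⁻¹ : Kˣ) : K) * ι x = 1 := by rw [← hu, Units.inv_mul]
  have hconj : diag u * incl K (δ⁻¹ * c n) * (diag u)⁻¹ ∈ elementaryIn K k := by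
    refine conj_mem_of_mem_elementary (incl K) ?_ (h n)
    rintro _ ⟨r, rfl⟩
    rw [incl_upper, incl_lower, diag_conj_upper, diag_conj_lower, hu]
    refine ⟨upper_mem_elementaryIn ⟨x ^ 2 * X ^ 2 * r, ?_⟩, lower_mem_elementaryIn ⟨y ^ 2 * r, ?_⟩⟩
    · push_cast [map_mul, map_pow, map_natCast]
      ring
    · simp only [map_mul, map_pow, map_natCast, Nat.cast_mul, Nat.cast_pow, hy']
      linear_combination (k * ι y ^ 2 * ι r * (((u⁻¹ : Kˣ) : K) * ι x + 1)) * hu'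
  have hδc := elementaryIn_anti (Dvd.intro _ rfl) (incl_mem_elementaryIn.2 (h n))
  rw [map_mul, map_inv] at hδc hconj
  have e' : (incl K δ)⁻¹ * diag u * incl K δ * (diag u)⁻¹ =
      (incl K δ)⁻¹ * incl K (c n) * ((incl K (c n))⁻¹ * diag u * incl K (c n) * (diag u)⁻¹) *
        (diag u * ((incl K δ)⁻¹ * incl K (c n)) * (diag u)⁻¹)⁻¹ := by group
  exact e' ▸ mul_mem (mul_mem hδc hn) (inv_mem hconj)

end NumberField

/-! ### Symbols of rows -/

section CommRing

variable {R : Type*} [CommRing R]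

/-- `(a, b)` is the first row of a matrix in the principal congruence subgroup of level `q`; see
`IsRow.exists_mem_principal`. -/
structure IsRow (q a b : R) : Prop where
  dvd_sub_one : q ∣ a - 1
  dvd : q ∣ b
  isCoprime : IsCoprime a b

lemma isCoprime_of_dvd_sub_one {q a : R} (h : q ∣ a - 1) : IsCoprime a q :=
  isCoprime_of_dvd_sub isCoprime_one_left h

lemma isRow_of_mem_principal {q : R} {g : SL(2, R)} (hg : g ∈ principal q) :
    IsRow q (g 0 0) (g 0 1) where
  dvd_sub_one := (mem_principal.1 hg).1
  dvd := (mem_principal.1 hg).2.1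
  isCoprime := ⟨g 1 1, -g 1 0, by linear_combination det_eq_one g⟩

lemma isRow_self {q a : R} (h : q ∣ a - 1) : IsRow q a q := ⟨h, dvd_rfl, isCoprime_of_dvd_sub_one h⟩

namespace IsRow

variable {q a b s m x : R}

lemma add_mul_left (h : IsRow q a b) (s : R) : IsRow q (a + b * s) b where
  dvd_sub_one := by simpa only [add_sub_right_comm] using dvd_add h.dvd_sub_one (h.dvd.mul_right s)
  dvd := h.dvd
  isCoprime := h.isCoprime.add_mul_left_left s

lemma add_mul_right (h : IsRow q a b) (hs : q ∣ s) : IsRow q a (b + a * s) where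
  dvd_sub_one := h.dvd_sub_one
  dvd := dvd_add h.dvd (hs.mul_left a)
  isCoprime := h.isCoprime.add_mul_left_right s

lemma mul_sq (h : IsRow q a b) (hx : IsCoprime a x) : IsRow q a (b * x ^ 2) where
  dvd_sub_one := h.dvd_sub_one
  dvd := h.dvd.mul_right _
  isCoprime := h.isCoprime.mul_right hx.pow_right

lemma exists_mem_principal (h : IsRow q a b) (hm : IsCoprime a m) :
    ∃ g ∈ principal q, g 0 0 = a ∧ g 0 1 = b ∧ q * m ∣ g 1 0 := by
  obtain ⟨d, c, hdc⟩ :=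
    h.isCoprime.mul_right ((isCoprime_of_dvd_sub_one h.dvd_sub_one).mul_right hm)
  obtain ⟨t, ht⟩ := h.dvd_sub_one
  refine ⟨ofEntries a b (-(q * m * c)) d (by linear_combination hdc),
    mem_principal.2 ⟨?_, ?_, ?_, ?_⟩, ?_, ?_, ?_⟩
  · simpa using h.dvd_sub_one
  · simpa using h.dvd
  · simp [mul_assoc]
  · exact ⟨-(d * t) - c * b * m, by simp; linear_combination hdc - d * ht⟩
  · simp
  · simp
  · simp

-- `b + a * (q * t)` is made divisible by `q * m` by solving a congruence modulo `m`, in which `a`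
-- is invertible.
lemma exists_mem_principal_dvd (h : IsRow q a b) (hm : IsCoprime a m) :
    ∃ t : R, ∃ g ∈ principal q, g 0 0 = a ∧ g 0 1 = b + a * (q * t) ∧ q * m ∣ g 0 1 ∧
      q * m ∣ g 1 0 := by
  obtain ⟨y, hy⟩ := h.dvd
  obtain ⟨u, v, huv⟩ := id hm
  obtain ⟨g, hg, h00, h01, h10⟩ :=
    (h.add_mul_right (dvd_mul_right q (-(y * u)))).exists_mem_principal hm
  refine ⟨_, g, hg, h00, h01, ⟨y * v, ?_⟩, h10⟩
  rw [h01, hy]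
  linear_combination (-(q * y)) * huv

end IsRow

lemma inv_mul_mem_principal {n : R} {g h : SL(2, R)} (h00 : g 0 0 = h 0 0) (hg01 : n ∣ g 0 1)
    (hg10 : n ∣ g 1 0) (hh01 : n ∣ h 0 1) (hh10 : n ∣ h 1 0) : g⁻¹ * h ∈ principal n := by
  have hg := det_eq_one g
  have hh := det_eq_one h
  obtain ⟨r, hr⟩ := hg01
  obtain ⟨s, hs⟩ := hh01
  rw [hr] at hg
  rw [hs] at hh
  refine mem_principal.2 ⟨⟨r * g 1 0 - r * h 1 0, ?_⟩, ?_, ?_, ⟨s * h 1 0 - g 1 0 * s, ?_⟩⟩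
  · simp [hr]
    linear_combination hg - g 1 1 * h00
  · simpa [hr, hs] using dvd_add ((dvd_mul_right n s).mul_left (g 1 1))
      ((dvd_mul_right n r).mul_right (h 1 1)).neg_right
  · simpa [mul_comm] using dvd_add (hg10.mul_left (h 0 0)).neg_right (hh10.mul_left (g 0 0))
  · simp [hs]
    linear_combination hh + h 1 1 * h00

variable {q : R} {A : Type*} [CommGroup A]

open Classical in
/-- The symbol of a row `(a, b)` of level `q ^ 2`: the image under `π` of any matrix with this first
row, which is well defined by `symbol_eq` when `π` kills the elementary matrices of level `q`. It is
`1` by convention if there is no such matrix. -/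
noncomputable def symbol (π : principal (q ^ 2) →* A) (a b : R) : A :=
  if h : ∃ g : principal (q ^ 2), g.1 0 0 = a ∧ g.1 0 1 = b then π h.choose else 1

variable {π : principal (q ^ 2) →* A}

lemma map_eq_of_inv_mul_mem_elementary (hπ : (elementary q).subgroupOf (principal (q ^ 2)) ≤ π.ker)
    {g h : principal (q ^ 2)} (hgh : g.1⁻¹ * h.1 ∈ elementary q) : π g = π h := by
  rw [← inv_mul_eq_one, ← map_inv, ← map_mul]
  exact hπ hgh

lemma symbol_eq (hπ : (elementary q).subgroupOf (principal (q ^ 2)) ≤ π.ker) {g : SL(2, R)}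
    (hg : g ∈ principal (q ^ 2)) {a b : R} (ha : g 0 0 = a) (hb : g 0 1 = b) :
    symbol π a b = π ⟨g, hg⟩ := by
  have h : ∃ g : principal (q ^ 2), g.1 0 0 = a ∧ g.1 0 1 = b := ⟨⟨g, hg⟩, ha, hb⟩
  obtain ⟨h00, h01⟩ := h.choose_spec
  obtain ⟨x, hx, hgx⟩ :=
    exists_lower_mul_of_row_eq h.choose.2 hg (h00.trans ha.symm) (h01.trans hb.symm)
  have hchoose : h.choose = ⟨lower x, lower_mem_principal hx⟩ * ⟨g, hg⟩ := Subtype.ext hgx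
  have hlower : π ⟨lower x, lower_mem_principal hx⟩ = 1 :=
    hπ (lower_mem_elementary ((dvd_pow_self q two_ne_zero).trans hx))
  rw [symbol, dif_pos h, hchoose, map_mul, hlower, one_mul]

lemma symbol_add_mul_left (hπ : (elementary q).subgroupOf (principal (q ^ 2)) ≤ π.ker) {a b s : R}
    (h : IsRow (q ^ 2) a b) (hs : q ^ 2 ∣ s) : symbol π (a + b * s) b = symbol π a b := by
  obtain ⟨g, hg, rfl, rfl, -⟩ := h.exists_mem_principal isCoprime_one_right
  rw [symbol_eq hπ hg rfl rfl,
    symbol_eq hπ (mul_mem hg (lower_mem_principal hs)) (by simp) (by simp)]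
  refine (map_eq_of_inv_mul_mem_elementary hπ ?_).symm
  simpa using lower_mem_elementary ((dvd_pow_self q two_ne_zero).trans hs)

lemma symbol_add_mul_right (hπ : (elementary q).subgroupOf (principal (q ^ 2)) ≤ π.ker) {a b s : R}
    (h : IsRow (q ^ 2) a b) (hs : q ^ 2 ∣ s) : symbol π a (b + a * s) = symbol π a b := by
  obtain ⟨g, hg, rfl, rfl, -⟩ := h.exists_mem_principal isCoprime_one_right
  rw [symbol_eq hπ hg rfl rfl,
    symbol_eq hπ (mul_mem hg (upper_mem_principal hs)) (by simp) (by simp [add_comm])]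
  refine (map_eq_of_inv_mul_mem_elementary hπ ?_).symm
  simpa using upper_mem_elementary ((dvd_pow_self q two_ne_zero).trans hs)

end CommRing

section NumberField

variable {K : Type*} [Field K]

local notation "ι" => algebraMap (𝓞 K) K

lemma exists_incl_eq_diag_conj {q x : 𝓞 K} {u : Kˣ} (hu : (u : K) = ι x) {g : SL(2, 𝓞 K)}
    (hg : g ∈ principal q) (h10 : q * x ^ 2 ∣ g 1 0) :
    ∃ h ∈ principal q, h 0 0 = g 0 0 ∧ h 0 1 = g 0 1 * x ^ 2 ∧
      incl K h = diag u * incl K g * (diag u)⁻¹ := by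
  obtain ⟨y, hy⟩ := h10
  obtain ⟨h00, h01, -, h11⟩ := mem_principal.1 hg
  have hu' : ((u⁻¹ : Kˣ) : K) = (ι x)⁻¹ := by rw [Units.val_inv_eq_inv_val, hu]
  have hx : ι x ≠ 0 := hu ▸ u.ne_zero
  have hdet := det_eq_one g
  rw [hy] at hdet
  refine ⟨ofEntries (g 0 0) (g 0 1 * x ^ 2) (q * y) (g 1 1) (by linear_combination hdet),
    mem_principal.2 ⟨?_, ?_, ?_, ?_⟩, ?_, ?_, ?_⟩
  · simpa using h00
  · simpa using h01.mul_right _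
  · simp
  · simpa using h11
  · simp
  · simp
  · rw [← diag_inv]
    apply ext_entries
    · simp [hu, hu']
      field_simp
    · simp [hu]
      ring
    · simp [hu', hy]
      field_simp
    · simp [hu, hu']
      field_simp

variable [NumberField K] {k : ℕ} {A : Type*} [CommGroup A] {π : principal ((k : 𝓞 K) ^ 2) →* A}

-- The quotient `g⁻¹ * h` lies in a deep congruence subgroup, on which conjugation by the diagonal
-- matrix of `x` is trivial modulo elementary matrices.
lemma symbol_mul_sq_of_dvd (hK : 1 < Fintype.card (InfinitePlace K)) (hk : 1 ≤ k)
    (hπ : (elementary (k : 𝓞 K)).subgroupOf (principal ((k : 𝓞 K) ^ 2)) ≤ π.ker) {x m : 𝓞 K}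
    {X : ℕ} (hX : 1 ≤ X) (hx : x ∣ (X : 𝓞 K)) (hm : m = ((k * X ^ 2 : ℕ) : 𝓞 K) ^ 2)
    {g h : SL(2, 𝓞 K)} (hg : g ∈ principal ((k : 𝓞 K) ^ 2)) (hh : h ∈ principal ((k : 𝓞 K) ^ 2))
    (h00 : g 0 0 = h 0 0) (hg01 : (k : 𝓞 K) ^ 2 * m ∣ g 0 1) (hg10 : (k : 𝓞 K) ^ 2 * m ∣ g 1 0)
    (hh01 : (k : 𝓞 K) ^ 2 * m ∣ h 0 1) (hh10 : (k : 𝓞 K) ^ 2 * m ∣ h 1 0) :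
    symbol π (g 0 0) (g 0 1 * x ^ 2) * symbol π (g 0 0) (h 0 1) =
      symbol π (g 0 0) (h 0 1 * x ^ 2) * symbol π (g 0 0) (g 0 1) := by
  have hx0 : ι x ≠ 0 := by
    rw [ne_eq, map_eq_zero_iff _ RingOfIntegers.coe_injective]
    rintro rfl
    exact Nat.pos_iff_ne_zero.1 hX (by exact_mod_cast zero_dvd_iff.1 hx)
  have hxm : (k : 𝓞 K) ^ 2 * x ^ 2 ∣ (k : 𝓞 K) ^ 2 * m := by
    refine mul_dvd_mul_left _ ((pow_dvd_pow_of_dvd hx 2).trans ⟨k ^ 2 * X ^ 2, ?_⟩)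
    rw [hm]
    push_cast
    ring
  obtain ⟨g', hg', hg00', hg01', hgconj⟩ :=
    exists_incl_eq_diag_conj (u := Units.mk0 _ hx0) rfl hg (hxm.trans hg10)
  obtain ⟨h', hh', hh00', hh01', hhconj⟩ :=
    exists_incl_eq_diag_conj (u := Units.mk0 _ hx0) rfl hh (hxm.trans hh10)
  have hmem : g⁻¹ * h ∈ principal (((k * X ^ 2 : ℕ) : 𝓞 K) ^ 2) :=
    have hdvd : m ∣ (k : 𝓞 K) ^ 2 * m := dvd_mul_left m _
    hm ▸ inv_mul_mem_principal h00 (hdvd.trans hg01) (hdvd.trans hg10) (hdvd.trans hh01)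
      (hdvd.trans hh10)
  have hcomm : (g⁻¹ * h)⁻¹ * (g'⁻¹ * h') ∈ elementary (k : 𝓞 K) := by
    rw [← incl_mem_elementaryIn]
    have e : incl K ((g⁻¹ * h)⁻¹ * (g'⁻¹ * h')) = (incl K (g⁻¹ * h))⁻¹ * diag (Units.mk0 _ hx0) *
        incl K (g⁻¹ * h) * (diag (Units.mk0 _ hx0))⁻¹ := by
      simp only [map_mul, map_inv, hgconj, hhconj]
      group
    exact e ▸ diag_commutator_mem_elementaryIn hK hk hX hx rfl hmem
  have hmap : π (⟨g, hg⟩⁻¹ * ⟨h, hh⟩) = π (⟨g', hg'⟩⁻¹ * ⟨h', hh'⟩) :=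
    map_eq_of_inv_mul_mem_elementary hπ hcomm
  rw [map_mul, map_mul, map_inv, map_inv, inv_mul_eq_iff_eq_mul] at hmap
  rw [symbol_eq hπ hg rfl rfl, symbol_eq hπ hh h00.symm rfl, symbol_eq hπ hg' hg00' hg01',
    symbol_eq hπ hh' (hh00'.trans h00.symm) hh01', hmap, mul_left_comm, mul_inv_cancel_left,
    mul_comm]

lemma symbol_mul_sq (hK : 1 < Fintype.card (InfinitePlace K)) (hk : 1 ≤ k)
    (hπ : (elementary (k : 𝓞 K)).subgroupOf (principal ((k : 𝓞 K) ^ 2)) ≤ π.ker) {a b c x : 𝓞 K}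
    {X : ℕ} (hX : 1 ≤ X) (hx : x ∣ (X : 𝓞 K)) (haX : IsCoprime a (X : 𝓞 K))
    (hb : IsRow ((k : 𝓞 K) ^ 2) a b) (hc : IsRow ((k : 𝓞 K) ^ 2) a c) :
    symbol π a (b * x ^ 2) * symbol π a c = symbol π a (c * x ^ 2) * symbol π a b := by
  have hax : IsCoprime a x := haX.of_isCoprime_of_dvd_right hx
  have hak : IsCoprime a (k : 𝓞 K) := isCoprime_of_dvd_sub_one
    ((dvd_pow_self _ two_ne_zero).trans hb.dvd_sub_one)
  obtain ⟨m, hm⟩ : ∃ m : 𝓞 K, m = ((k * X ^ 2 : ℕ) : 𝓞 K) ^ 2 := ⟨_, rfl⟩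
  have ham : IsCoprime a m := by
    rw [hm]
    push_cast
    exact (hak.mul_right haX.pow_right).pow_right
  obtain ⟨s, g, hg, rfl, hg01, hgm, hgm'⟩ := hb.exists_mem_principal_dvd ham
  obtain ⟨t, h, hh, hh00, hh01, hhm, hhm'⟩ := hc.exists_mem_principal_dvd ham
  have key := symbol_mul_sq_of_dvd hK hk hπ hX hx hm hg hh hh00.symm hgm hgm' hhm hhm'
  have symbol_mul_sq_add (y : 𝓞 K) {r : 𝓞 K} (hr : IsRow ((k : 𝓞 K) ^ 2) (g 0 0) r) :
      symbol π (g 0 0) ((r + g 0 0 * (k ^ 2 * y)) * x ^ 2) = symbol π (g 0 0) (r * x ^ 2) := by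
    rw [← symbol_add_mul_right hπ (hr.mul_sq hax) ((dvd_mul_right _ y).mul_right (x ^ 2))]
    congr 1
    ring
  rwa [hg01, hh01, symbol_mul_sq_add s hb, symbol_mul_sq_add t hc,
    symbol_add_mul_right hπ hb (dvd_mul_right _ s),
    symbol_add_mul_right hπ hc (dvd_mul_right _ t)] at key

end NumberField

/-! ### Uniform torsion -/

section CommRing

variable {R : Type*} [CommRing R] {q : R} {A : Type*} [CommGroup A]

/-- The factor by which the symbol `symbol π a b` of a row `(a, b)` changes when `b` is multiplied
by `x ^ 2`, computed for `b = q ^ 2`; over a ring of integers with infinitely many units it is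
independent of `b`, see `symbol_mul_sq_eq_mul_symbolRatio`. -/
noncomputable def symbolRatio (π : principal (q ^ 2) →* A) (a x : R) : A :=
  symbol π a (q ^ 2 * x ^ 2) * (symbol π a (q ^ 2))⁻¹

variable {π : principal (q ^ 2) →* A}

lemma symbolRatio_one (a : R) : symbolRatio π a 1 = 1 := by
  rw [symbolRatio, one_pow, mul_one, mul_inv_cancel]

lemma symbolRatio_eq_of_dvd_sub_right
    (hπ : (elementary q).subgroupOf (principal (q ^ 2)) ≤ π.ker) {a x y : R} (ha : q ^ 2 ∣ a - 1)
    (hx : IsCoprime x a) (hxy : a ∣ y - x) : symbolRatio π a y = symbolRatio π a x := by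
  obtain ⟨r, hr⟩ := hxy
  obtain rfl : y = x + a * r := by linear_combination hr
  have e : q ^ 2 * (x + a * r) ^ 2 = q ^ 2 * x ^ 2 + a * (q ^ 2 * (2 * x * r + a * r ^ 2)) := by
    ring
  rw [symbolRatio, symbolRatio, e,
    symbol_add_mul_right hπ ((isRow_self ha).mul_sq hx.symm) (dvd_mul_right _ _)]

lemma symbolRatio_eq_of_dvd_sub_left
    (hπ : (elementary q).subgroupOf (principal (q ^ 2)) ≤ π.ker) {a a' x : R} (ha : q ^ 2 ∣ a - 1)
    (hx : IsCoprime x a) (haa' : (q ^ 2) ^ 2 * x ^ 2 ∣ a' - a) :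
    symbolRatio π a' x = symbolRatio π a x := by
  obtain ⟨r, hr⟩ := haa'
  have e : a' = a + q ^ 2 * x ^ 2 * (q ^ 2 * r) := by linear_combination hr
  have e' : a' = a + q ^ 2 * (q ^ 2 * (x ^ 2 * r)) := by linear_combination hr
  have h := symbol_add_mul_left hπ ((isRow_self ha).mul_sq hx.symm) (dvd_mul_right (q ^ 2) r)
  have h' := symbol_add_mul_left hπ (isRow_self ha) (dvd_mul_right (q ^ 2) (x ^ 2 * r))
  rw [← e] at h
  rw [← e'] at h'
  rw [symbolRatio, symbolRatio, h, h']

end CommRing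

-- The prime `p'` is `1 + q` modulo the part of `n` built from primes dividing `q`, and `2` modulo
-- the part of `n` prime to `q`.
lemma exists_prime_modEq_forall_dvd_glOrder {q n X p : ℕ} (hq : q ≠ 0) (h2q : 2 ∣ q) (hn : n ≠ 0)
    (hX : X ≠ 0) (hXqn : X.Coprime (q * n)) (hXp : X.Coprime p) (hp : p ≡ 1 [ZMOD q]) (d : ℕ) :
    ∃ p' : ℕ, p'.Prime ∧ p' ≡ p [ZMOD (q * X ^ 2 : ℕ)] ∧
      ∀ t : ℕ, t ∣ n → (t : ℤ) ∣ glOrder d p' → (t : ℤ) ∣ glOrder d (1 + q) * glOrder d 2 := by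
  obtain ⟨a, b, j, rfl, ha, hb⟩ := exists_eq_mul_dvd_pow_coprime n q hn
  have hqab : (q * a).Coprime b :=
    hb.symm.mul_left ((hb.symm.pow_left j).coprime_dvd_left ha)
  have hqa0 : q * a ≠ 0 := mul_ne_zero hq (left_ne_zero_of_mul hn)
  have hb0 : b ≠ 0 := right_ne_zero_of_mul hn
  have hcop : IsCoprime (1 + q : ℤ) (q * a : ℕ) := by
    have hcopq : IsCoprime (1 + q : ℤ) q := ⟨1, -1, by ring⟩
    rw [Nat.cast_mul]
    exact hcopq.mul_right
      ((hcopq.pow_right (n := j)).of_isCoprime_of_dvd_right (by exact_mod_cast ha))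
  obtain ⟨z, -, -, hza, hzb⟩ := exists_prime_gt_modEq hqa0 hb0 hqab hcop
    (Nat.isCoprime_iff_coprime.2 (hb.symm.coprime_dvd_left h2q)) 0
  have hz : IsCoprime (z : ℤ) (q * a * b : ℕ) := by
    rw [Nat.cast_mul]
    exact (isCoprime_of_dvd_sub hcop hza.symm.dvd).mul_right
      (isCoprime_of_dvd_sub (Nat.isCoprime_iff_coprime.2 (hb.symm.coprime_dvd_left h2q))
        hzb.symm.dvd)
  obtain ⟨p', -, hp', hp'z, hp'X⟩ := exists_prime_gt_modEq (mul_ne_zero hqa0 hb0)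
    (pow_ne_zero 2 hX) (by simpa only [mul_assoc] using hXqn.symm.pow_right 2) hz
    (Nat.isCoprime_iff_coprime.2 (hXp.symm.pow_right 2)) 0
  have hp'a : p' ≡ 1 + q [ZMOD (q * a : ℕ)] :=
    (hp'z.of_dvd (by exact_mod_cast dvd_mul_right (q * a) b)).trans hza
  have hp'b : p' ≡ 2 [ZMOD b] := (hp'z.of_dvd (by exact_mod_cast dvd_mul_left b (q * a))).trans hzb
  have hp'q : p' ≡ 1 [ZMOD q] := by
    simpa [Int.ModEq] using hp'a.of_dvd (Int.natCast_dvd_natCast.2 (dvd_mul_right q a))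
  refine ⟨p', hp', ?_, fun t ht htp' => ?_⟩
  · rw [Nat.cast_mul]
    refine (Int.modEq_and_modEq_iff_modEq_mul ?_).1 ⟨hp'q.trans hp.symm, hp'X⟩
    simpa only [Int.natAbs_natCast] using hXqn.coprime_mul_right_right.symm.pow_right 2
  · obtain ⟨r, s, hr, hs, rfl⟩ := exists_dvd_and_dvd_of_dvd_mul ht
    rw [Nat.cast_mul] at htp' ⊢
    have hp'r : p' ≡ 1 + q [ZMOD r] := hp'a.of_dvd (by exact_mod_cast hr.mul_left q)
    have hp's : p' ≡ 2 [ZMOD s] := hp'b.of_dvd (by exact_mod_cast hs)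
    exact mul_dvd_mul ((glOrder_congr hp'r).dvd_iff.1 ((dvd_mul_right _ _).trans htp'))
      ((glOrder_congr hp's).dvd_iff.1 ((dvd_mul_left _ _).trans htp'))

/-- An exponent killing all the values `symbolRatio π p x`, see `symbolRatio_pow_torsionExponent`:
`d` is the degree of the number field and `q` the level. -/
def torsionExponent (d q : ℕ) : ℕ := (glOrder d (1 + q) * glOrder d 2).natAbs

lemma torsionExponent_ne_zero {d q : ℕ} (hq : q ≠ 0) : torsionExponent d q ≠ 0 :=
  Int.natAbs_ne_zero.2 (mul_ne_zero (glOrder_ne_zero (by omega)) (glOrder_ne_zero le_rfl))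

section NumberField

variable {K : Type*} [Field K] [NumberField K] {k : ℕ} {A : Type*} [CommGroup A]
  {π : principal ((k : 𝓞 K) ^ 2) →* A}

lemma ne_zero_of_isCoprime_natCast {x : 𝓞 K} {n : ℕ} (hn : n ≠ 1) (h : IsCoprime x (n : 𝓞 K)) :
    x ≠ 0 := by
  rintro rfl
  exact not_isUnit_natCast hn (isCoprime_zero_left.1 h)

lemma exists_dvd_sub_dvd_natCast_coprime {p n : ℕ} (hp : p ≠ 1) (hn : n ≠ 0) {x : 𝓞 K}
    (hx : IsCoprime x (p : 𝓞 K)) :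
    ∃ (y : 𝓞 K) (X : ℕ), (p : 𝓞 K) ∣ y - x ∧ X ≠ 0 ∧ y ∣ (X : 𝓞 K) ∧ X.Coprime (n * p) := by
  obtain ⟨s, hs⟩ := exists_isCoprime_add_mul hx.symm (Nat.cast_ne_zero.2 hn : (n : 𝓞 K) ≠ 0)
  have hyp : IsCoprime (x + p * s) (p : 𝓞 K) := hx.add_mul_left_left s
  obtain ⟨X, hX, hyX, hXc⟩ :=
    exists_dvd_natCast_coprime (q := n * p) (ne_zero_of_isCoprime_natCast hp hyp)
      (by rw [Nat.cast_mul]; exact hs.mul_right hyp)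
  exact ⟨x + p * s, X, ⟨s, add_sub_cancel_left _ _⟩, hX, hyX, hXc⟩

lemma symbol_mul_sq_eq_mul_symbolRatio (hK : 1 < Fintype.card (InfinitePlace K)) (hk : 1 ≤ k)
    (hπ : (elementary (k : 𝓞 K)).subgroupOf (principal ((k : 𝓞 K) ^ 2)) ≤ π.ker) {p : ℕ}
    (hp : p ≠ 1) {x b : 𝓞 K} (hx : IsCoprime x (p : 𝓞 K)) (hb : IsRow ((k : 𝓞 K) ^ 2) p b) :
    symbol π p (b * x ^ 2) = symbol π p b * symbolRatio π p x := by
  obtain ⟨X, hX, hxX, hXp⟩ := exists_dvd_natCast_coprime (ne_zero_of_isCoprime_natCast hp hx) hx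
  have h := symbol_mul_sq hK hk hπ (Nat.one_le_iff_ne_zero.2 hX) hxX (hXp.symm.cast (R := 𝓞 K)) hb
    (isRow_self hb.dvd_sub_one)
  rw [symbolRatio, eq_mul_inv_of_mul_eq h, mul_left_comm, mul_assoc]

lemma symbolRatio_mul (hK : 1 < Fintype.card (InfinitePlace K)) (hk : 1 ≤ k)
    (hπ : (elementary (k : 𝓞 K)).subgroupOf (principal ((k : 𝓞 K) ^ 2)) ≤ π.ker) {p : ℕ}
    (hp : p ≠ 1) (hpk : (k : 𝓞 K) ^ 2 ∣ p - 1) {x y : 𝓞 K} (hx : IsCoprime x (p : 𝓞 K))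
    (hy : IsCoprime y (p : 𝓞 K)) :
    symbolRatio π p (x * y) = symbolRatio π p x * symbolRatio π p y := by
  have hrow := isRow_self hpk
  rw [symbolRatio, mul_pow, ← mul_assoc,
    symbol_mul_sq_eq_mul_symbolRatio hK hk hπ hp hy (hrow.mul_sq hx.symm),
    symbol_mul_sq_eq_mul_symbolRatio hK hk hπ hp hx hrow, mul_inv_eq_iff_eq_mul,
    mul_assoc, mul_comm]

lemma symbolRatio_pow (hK : 1 < Fintype.card (InfinitePlace K)) (hk : 1 ≤ k)
    (hπ : (elementary (k : 𝓞 K)).subgroupOf (principal ((k : 𝓞 K) ^ 2)) ≤ π.ker) {p : ℕ}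
    (hp : p ≠ 1) (hpk : (k : 𝓞 K) ^ 2 ∣ p - 1) {x : 𝓞 K} (hx : IsCoprime x (p : 𝓞 K)) (n : ℕ) :
    symbolRatio π p (x ^ n) = symbolRatio π p x ^ n := by
  induction n with
  | zero => rw [pow_zero, pow_zero, symbolRatio_one]
  | succ n ih => rw [pow_succ, symbolRatio_mul hK hk hπ hp hpk hx.pow_left hx, ih, pow_succ]

lemma symbolRatio_pow_glOrder (hK : 1 < Fintype.card (InfinitePlace K)) (hk : 1 ≤ k)
    (hπ : (elementary (k : 𝓞 K)).subgroupOf (principal ((k : 𝓞 K) ^ 2)) ≤ π.ker) {p : ℕ}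
    (hp : p.Prime) (hpk : (k : 𝓞 K) ^ 2 ∣ p - 1) {x : 𝓞 K} (hx : IsCoprime x (p : 𝓞 K)) :
    symbolRatio π p x ^ (glOrder (Module.finrank ℤ (𝓞 K)) p).natAbs = 1 := by
  rw [← symbolRatio_pow hK hk hπ hp.ne_one hpk hx, symbolRatio_eq_of_dvd_sub_right hπ hpk
    isCoprime_one_left (natCast_dvd_pow_glOrder_sub_one hp hx), symbolRatio_one]

-- `p` may be replaced by a prime `p'` for which the greatest common divisor of the bounds given by
-- `symbolRatio_pow_glOrder` for `p` and `p'` divides `torsionExponent`.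
lemma symbolRatio_pow_torsionExponent (hK : 1 < Fintype.card (InfinitePlace K)) (hk : 1 ≤ k)
    (h2k : 2 ∣ k) (hπ : (elementary (k : 𝓞 K)).subgroupOf (principal ((k : 𝓞 K) ^ 2)) ≤ π.ker)
    {p : ℕ} (hp : p.Prime) (hpk : p ≡ 1 [ZMOD ((k ^ 2) ^ 2 : ℕ)]) {x : 𝓞 K}
    (hx : IsCoprime x (p : 𝓞 K)) :
    symbolRatio π p x ^ torsionExponent (Module.finrank ℤ (𝓞 K)) ((k ^ 2) ^ 2) = 1 := by
  set d := Module.finrank ℤ (𝓞 K)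
  set q := (k ^ 2) ^ 2 with hq
  have hq0 : q ≠ 0 := pow_ne_zero 2 (pow_ne_zero 2 (by omega))
  have hkq : (k : 𝓞 K) ^ 2 ∣ (q : 𝓞 K) := ⟨(k : 𝓞 K) ^ 2, by rw [hq]; push_cast; ring⟩
  have dvd_sub_one {p' : ℕ} (h : p' ≡ 1 [ZMOD q]) : (k : 𝓞 K) ^ 2 ∣ (p' : 𝓞 K) - 1 :=
    hkq.trans (by simpa using natCast_dvd_sub_of_modEq (R := 𝓞 K) h)
  have hn : (glOrder d p).natAbs ≠ 0 :=
    Int.natAbs_ne_zero.2 (glOrder_ne_zero (by exact_mod_cast hp.two_le))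
  obtain ⟨y, X, hyx, hX, hyX, hXc⟩ := exists_dvd_sub_dvd_natCast_coprime hp.ne_one
    (mul_ne_zero hq0 hn) hx
  have hyp : IsCoprime y (p : 𝓞 K) := isCoprime_of_dvd_sub hx hyx
  obtain ⟨p', hp', hp'X, hdvd⟩ := exists_prime_modEq_forall_dvd_glOrder hq0
    ((h2k.trans (dvd_pow_self _ two_ne_zero)).trans (dvd_pow_self _ two_ne_zero)) hn hX
    hXc.coprime_mul_right_right hXc.coprime_mul_left_right hpk d
  have hp'k : p' ≡ 1 [ZMOD q] :=
    (hp'X.of_dvd (by exact_mod_cast dvd_mul_right q (X ^ 2))).trans hpk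
  have hp'y : ((k : 𝓞 K) ^ 2) ^ 2 * y ^ 2 ∣ (p' : 𝓞 K) - p := by
    have h := natCast_dvd_sub_of_modEq (R := 𝓞 K) hp'X
    push_cast [hq] at h
    exact (mul_dvd_mul_left _ (pow_dvd_pow_of_dvd hyX 2)).trans h
  have hyp' : IsCoprime y (p' : 𝓞 K) :=
    (isCoprime_of_dvd_sub hyp.symm ((dvd_pow_self y two_ne_zero).mul_left _ |>.trans hp'y)).symm
  have hxy : symbolRatio π p y = symbolRatio π p x :=
    symbolRatio_eq_of_dvd_sub_right hπ (dvd_sub_one hpk) hx hyx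
  have hpp' : symbolRatio π p' y = symbolRatio π p y :=
    symbolRatio_eq_of_dvd_sub_left hπ (dvd_sub_one hpk) hyp hp'y
  rw [← hxy, ← orderOf_dvd_iff_pow_eq_one, torsionExponent, ← Int.natCast_dvd]
  refine hdvd _ (orderOf_dvd_of_pow_eq_one ?_) (Int.natCast_dvd.2 (orderOf_dvd_of_pow_eq_one ?_))
  · exact symbolRatio_pow_glOrder hK hk hπ hp (dvd_sub_one hpk) hyp
  · rw [← hpp']
    exact symbolRatio_pow_glOrder hK hk hπ hp' (dvd_sub_one hp'k) hyp'

end NumberField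

/-! ### Roots of unity modulo a prime -/

lemma dvd_sub_one_of_dvd_pow_sub_one {R : Type*} [CommRing R] {m y : R} {n : ℕ}
    (hn : IsCoprime (n : R) m) (hy : ∀ P : Ideal R, P.IsMaximal → m ∈ P → y - 1 ∈ P)
    (hyn : m ∣ y ^ n - 1) : m ∣ y - 1 := by
  have hsum : IsCoprime (∑ i ∈ Finset.range n, y ^ i) m := by
    refine isCoprime_of_forall_maximal fun P hP hmP hS => ?_
    have hdiff : ∑ i ∈ Finset.range n, (y ^ i - 1) ∈ P := by
      refine P.sum_mem fun i _ => ?_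
      rw [← mul_geom_sum]
      exact P.mul_mem_right _ (hy P hP hmP)
    have hnP : (n : R) ∈ P := by simpa using P.sub_mem hS hdiff
    obtain ⟨u, v, huv⟩ := hn
    exact hP.ne_top (P.eq_top_iff_one.2
      (huv ▸ P.add_mem (P.mul_mem_left u hnP) (P.mul_mem_left v hmP)))
  rw [← geom_sum_mul] at hyn
  exact hsum.symm.dvd_of_dvd_mul_left hyn

lemma rootsOfUnity_eq_one_of_factor_eq_one {R : Type*} [CommRing R] {m : R} {n : ℕ}
    (hn : IsCoprime (n : R) m) {w : (R ⧸ Ideal.span {m})ˣ} (hw : w ^ n = 1)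
    (hP : ∀ P : Ideal R, P.IsMaximal → ∀ hmP : Ideal.span {m} ≤ P,
      Ideal.Quotient.factor hmP w = 1) : w = 1 := by
  obtain ⟨y, hy⟩ := Ideal.Quotient.mk_surjective (w : R ⧸ Ideal.span {m})
  have hyn : Ideal.Quotient.mk (Ideal.span {m}) (y ^ n) = Ideal.Quotient.mk _ 1 := by
    rw [map_pow, hy, map_one, ← Units.val_pow_eq_pow_val, hw, Units.val_one]
  refine Units.ext ?_
  rw [Units.val_one, ← hy, ← map_one (Ideal.Quotient.mk _), Ideal.Quotient.eq,
    Ideal.mem_span_singleton]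
  refine dvd_sub_one_of_dvd_pow_sub_one hn (fun P hPmax hmP => ?_)
    (Ideal.mem_span_singleton.1 (Ideal.Quotient.eq.1 hyn))
  have hle := (Ideal.span_singleton_le_iff_mem P).2 hmP
  rw [← Ideal.Quotient.eq, map_one, ← Ideal.Quotient.factor_mk hle, hy]
  exact hP P hPmax hle

section NumberField

variable {K : Type*} [Field K] [NumberField K]

lemma finite_maximal_and_card_le {p : ℕ} (hp : p.Prime) :
    Finite {P : Ideal (𝓞 K) // P.IsMaximal ∧ (p : 𝓞 K) ∈ P} ∧
      Nat.card {P : Ideal (𝓞 K) // P.IsMaximal ∧ (p : 𝓞 K) ∈ P} ≤ Module.finrank ℤ (𝓞 K) := by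
  have hle (s : Finset {P : Ideal (𝓞 K) // P.IsMaximal ∧ (p : 𝓞 K) ∈ P}) :
      s.card ≤ Module.finrank ℤ (𝓞 K) := by
    rw [← Finset.card_map (Function.Embedding.subtype _)]
    refine card_maximal_le_finrank hp fun P hP => ?_
    obtain ⟨P', -, rfl⟩ := Finset.mem_map.1 hP
    exact P'.2
  have := fintypeOfFinsetCardLe _ hle
  exact ⟨inferInstance, Nat.card_eq_fintype_card.trans_le (hle Finset.univ)⟩

-- Roots of unity modulo `p` are determined by their residues at the primes above `p`.
lemma card_rootsOfUnity_le {p n : ℕ} (hp : p.Prime) (hn : n ≠ 0) (hnp : n < p) :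
    Nat.card (rootsOfUnity n (𝓞 K ⧸ Ideal.span {(p : 𝓞 K)})) ≤ n ^ Module.finrank ℤ (𝓞 K) := by
  have : NeZero n := ⟨hn⟩
  obtain ⟨hfin, hcard⟩ := finite_maximal_and_card_le (K := K) hp
  have := Fintype.ofFinite {P : Ideal (𝓞 K) // P.IsMaximal ∧ (p : 𝓞 K) ∈ P}
  have hle (P : {P : Ideal (𝓞 K) // P.IsMaximal ∧ (p : 𝓞 K) ∈ P}) : Ideal.span {(p : 𝓞 K)} ≤ P.1 :=
    (Ideal.span_singleton_le_iff_mem _).2 P.2.2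
  have (P : {P : Ideal (𝓞 K) // P.IsMaximal ∧ (p : 𝓞 K) ∈ P}) : IsDomain (𝓞 K ⧸ P.1) :=
    (Ideal.Quotient.isDomain_iff_prime _).2 P.2.1.isPrime
  let reduction : rootsOfUnity n (𝓞 K ⧸ Ideal.span {(p : 𝓞 K)}) →*
      ((P : {P : Ideal (𝓞 K) // P.IsMaximal ∧ (p : 𝓞 K) ∈ P}) → rootsOfUnity n (𝓞 K ⧸ P.1)) :=
    MonoidHom.pi fun P => restrictRootsOfUnity (Ideal.Quotient.factor (hle P)) n
  have hinj : Function.Injective reduction := by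
    refine (injective_iff_map_eq_one _).2 fun w hw => Subtype.ext ?_
    refine rootsOfUnity_eq_one_of_factor_eq_one
      ((Nat.coprime_of_lt_prime hn hnp hp).symm.cast (R := 𝓞 K)) w.2 fun P hP hpP => ?_
    exact congrArg (fun z => ((z.1 : (𝓞 K ⧸ P)ˣ) : 𝓞 K ⧸ P))
      (congrFun hw ⟨P, hP, (Ideal.span_singleton_le_iff_mem P).1 hpP⟩)
  calc
    _ ≤ Nat.card (∀ P : {P : Ideal (𝓞 K) // P.IsMaximal ∧ (p : 𝓞 K) ∈ P},
          rootsOfUnity n (𝓞 K ⧸ P.1)) := Nat.card_le_card_of_injective _ hinj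
    _ = ∏ P : {P : Ideal (𝓞 K) // P.IsMaximal ∧ (p : 𝓞 K) ∈ P},
          Nat.card (rootsOfUnity n (𝓞 K ⧸ P.1)) := Nat.card_pi
    _ ≤ ∏ _P : {P : Ideal (𝓞 K) // P.IsMaximal ∧ (p : 𝓞 K) ∈ P}, n :=
        Finset.prod_le_prod' fun P _ => card_rootsOfUnity _ _
    _ = n ^ Nat.card {P : Ideal (𝓞 K) // P.IsMaximal ∧ (p : 𝓞 K) ∈ P} := by simp
    _ ≤ n ^ Module.finrank ℤ (𝓞 K) := Nat.pow_le_pow_right (Nat.pos_of_ne_zero hn) hcard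

end NumberField

lemma index_range_powMonoidHom_units {R : Type*} [CommRing R] [Finite R] (n : ℕ) :
    (powMonoidHom n : Rˣ →* Rˣ).range.index = Nat.card (rootsOfUnity n R) := by
  rw [Subgroup.index_range]
  rfl

/-! ### Finiteness -/

section NumberField

variable {K : Type*} [Field K] [NumberField K] {k : ℕ} {A : Type*} [CommGroup A]
  {π : principal ((k : 𝓞 K) ^ 2) →* A}

lemma exists_symbol_eq (hk : 1 ≤ k) (h2k : 2 ∣ k)
    (hπ : (elementary (k : 𝓞 K)).subgroupOf (principal ((k : 𝓞 K) ^ 2)) ≤ π.ker)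
    (hsurj : Function.Surjective π) (x : A) {N : ℕ} (hN : N ≠ 0) :
    ∃ (a β : 𝓞 K) (B α : ℕ), B ≠ 0 ∧ B.Coprime (k ^ 2 * N) ∧ α.Coprime B ∧
      ((k : 𝓞 K) ^ 2) ^ 2 ∣ a - 1 ∧ β ∣ (B : 𝓞 K) ∧ β ∣ a - α ∧
      IsRow ((k : 𝓞 K) ^ 2) a (k ^ 2 * β) ∧ symbol π a (k ^ 2 * β) = x := by
  obtain ⟨⟨g, hg⟩, rfl⟩ := hsurj x
  have hk0 : (k : 𝓞 K) ≠ 0 := Nat.cast_ne_zero.2 (by omega)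
  obtain ⟨e, he, hge⟩ :=
    exists_mul_mem_principal (n := ((k : 𝓞 K) ^ 2) ^ 2) (pow_ne_zero 2 (pow_ne_zero 2 hk0)) hg
  obtain ⟨h00, ⟨b, hb⟩, -, -⟩ := mem_principal.1 hge
  have hkk : (k : 𝓞 K) ^ 2 ∣ ((k : 𝓞 K) ^ 2) ^ 2 := dvd_pow_self _ two_ne_zero
  have hcop : IsCoprime ((g * e) 0 0) ((k : 𝓞 K) ^ 2 * b) :=
    (isRow_of_mem_principal hge).isCoprime.of_isCoprime_of_dvd_right
      ⟨(k : 𝓞 K) ^ 2, by rw [hb]; ring⟩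
  obtain ⟨s, B, α, hB, hβB, hβα, hBk, hαB⟩ := exists_natCast_row hcop
    (ne_zero_of_dvd_sub_one (by omega : k ≠ 1)
      (((dvd_pow_self _ two_ne_zero).trans hkk).trans h00))
    (mul_ne_zero (pow_ne_zero 2 (by omega : k ≠ 0)) hN)
  have hmem : g * e * upper ((k : 𝓞 K) ^ 2 * s) ∈ principal ((k : 𝓞 K) ^ 2) :=
    mul_mem (principal_anti hkk hge) (upper_mem_principal (dvd_mul_right _ _))
  have hrow00 : (g * e * upper ((k : 𝓞 K) ^ 2 * s)) 0 0 = (g * e) 0 0 := by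
    rw [mul_apply]
    simp
  have hrow01 : (g * e * upper ((k : 𝓞 K) ^ 2 * s)) 0 1 =
      k ^ 2 * (k ^ 2 * b + (g * e) 0 0 * s) := by
    rw [mul_apply, hb]
    simp
    ring
  refine ⟨(g * e) 0 0, k ^ 2 * b + (g * e) 0 0 * s, B, α, hB, hBk, hαB, h00, hβB, hβα,
    by simpa only [hrow00, hrow01] using isRow_of_mem_principal hmem, ?_⟩
  rw [symbol_eq hπ hmem hrow00 hrow01]
  refine (map_eq_of_inv_mul_mem_elementary hπ ?_).symm
  have e' : g⁻¹ * (g * e * upper ((k : 𝓞 K) ^ 2 * s)) = e * upper ((k : 𝓞 K) ^ 2 * s) := by group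
  exact e' ▸ mul_mem he
    (upper_mem_elementary ((dvd_pow_self _ two_ne_zero).trans (dvd_mul_right _ _)))

lemma exists_symbol_eq_of_modEq (hk : 1 ≤ k) (h2k : 2 ∣ k)
    (hπ : (elementary (k : 𝓞 K)).subgroupOf (principal ((k : 𝓞 K) ^ 2)) ≤ π.ker)
    (hsurj : Function.Surjective π) (x : A) {N : ℕ} (hN : N ≠ 0) :
    ∃ (b : 𝓞 K) (B α : ℕ), B ≠ 0 ∧ B.Coprime (k ^ 2 * N) ∧ α.Coprime B ∧
      ∀ p : ℕ, p ≡ 1 [ZMOD ((k ^ 2) ^ 2 : ℕ)] → p ≡ α [ZMOD B] →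
        IsRow ((k : 𝓞 K) ^ 2) p b ∧ symbol π p b = x := by
  obtain ⟨a, β, B, α, hB, hBk, hαB, ha, hβB, hβα, hrow, hx⟩ := exists_symbol_eq hk h2k hπ hsurj x hN
  refine ⟨k ^ 2 * β, B, α, hB, hBk, hαB, fun p hpk hpB => ?_⟩
  have hkp : ((k : 𝓞 K) ^ 2) ^ 2 ∣ (p : 𝓞 K) - a := by
    have h := natCast_dvd_sub_of_modEq (R := 𝓞 K) hpk
    push_cast at h
    simpa using dvd_sub h ha
  have hβp : β ∣ (p : 𝓞 K) - a := by
    have h := hβB.trans (natCast_dvd_sub_of_modEq (R := 𝓞 K) hpB)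
    push_cast at h
    simpa using dvd_sub h hβα
  have hkβ : IsCoprime (((k : 𝓞 K) ^ 2) ^ 2) β := by
    have h := (hBk.coprime_mul_right_right.symm.pow_left 2).cast (R := 𝓞 K)
    push_cast at h
    exact h.of_isCoprime_of_dvd_right hβB
  obtain ⟨r, hr⟩ := hkβ.mul_dvd hkp hβp
  have e : (p : 𝓞 K) = a + k ^ 2 * β * (k ^ 2 * r) := by linear_combination hr
  rw [e]
  exact ⟨hrow.add_mul_left _, (symbol_add_mul_left hπ hrow (dvd_mul_right _ _)).trans hx⟩

lemma exists_forall_mem_symbol_eq_of_modEq (hk : 1 ≤ k) (h2k : 2 ∣ k)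
    (hπ : (elementary (k : 𝓞 K)).subgroupOf (principal ((k : 𝓞 K) ^ 2)) ≤ π.ker)
    (hsurj : Function.Surjective π) (S : Finset A) :
    ∃ (b : A → 𝓞 K) (B α : ℕ), B ≠ 0 ∧ B.Coprime (k ^ 2) ∧ α.Coprime B ∧
      ∀ p : ℕ, p ≡ 1 [ZMOD ((k ^ 2) ^ 2 : ℕ)] → p ≡ α [ZMOD B] →
        ∀ x ∈ S, IsRow ((k : 𝓞 K) ^ 2) p (b x) ∧ symbol π p (b x) = x := by
  classical
  induction S using Finset.induction_on with
  | empty => exact ⟨0, 1, 1, one_ne_zero, Nat.coprime_one_left _, Nat.coprime_one_left _, by simp⟩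
  | insert x S hx ih =>
    obtain ⟨b, B, α, hB, hBk, hα, h⟩ := ih
    obtain ⟨b', B', α', hB', hBk', hα', h'⟩ := exists_symbol_eq_of_modEq hk h2k hπ hsurj x hB
    obtain ⟨z, -, -, hz, hz'⟩ := exists_prime_gt_modEq hB hB' hBk'.coprime_mul_left_right.symm
      (Nat.isCoprime_iff_coprime.2 hα) (Nat.isCoprime_iff_coprime.2 hα') 0
    have hzB : z.Coprime (B * B') := Nat.isCoprime_iff_coprime.1 (by
      rw [Nat.cast_mul]
      exact (isCoprime_of_dvd_sub (Nat.isCoprime_iff_coprime.2 hα) hz.symm.dvd).mul_right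
        (isCoprime_of_dvd_sub (Nat.isCoprime_iff_coprime.2 hα') hz'.symm.dvd))
    refine ⟨Function.update b x b', B * B', z, mul_ne_zero hB hB',
      hBk.mul_left hBk'.coprime_mul_right_right, hzB, fun p hp hpz y hy => ?_⟩
    rcases Finset.mem_insert.1 hy with rfl | hyS
    · rw [Function.update_self]
      exact h' p hp ((hpz.of_dvd (by exact_mod_cast dvd_mul_left B' B)).trans hz')
    · rw [Function.update_of_ne (ne_of_mem_of_not_mem hyS hx)]
      exact h p hp ((hpz.of_dvd (by exact_mod_cast dvd_mul_right B B')).trans hz) y hyS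

lemma symbol_eq_of_dvd_sub_mul_pow (hK : 1 < Fintype.card (InfinitePlace K)) (hk : 1 ≤ k)
    (h2k : 2 ∣ k) (hπ : (elementary (k : 𝓞 K)).subgroupOf (principal ((k : 𝓞 K) ^ 2)) ≤ π.ker)
    {p : ℕ} (hp : p.Prime) (hpk : p ≡ 1 [ZMOD ((k ^ 2) ^ 2 : ℕ)]) {b c z : 𝓞 K}
    (hb : IsRow ((k : 𝓞 K) ^ 2) p b) (hc : IsRow ((k : 𝓞 K) ^ 2) p c) (hz : IsCoprime z (p : 𝓞 K))
    (hbc : (p : 𝓞 K) ∣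
      c - b * z ^ (2 * torsionExponent (Module.finrank ℤ (𝓞 K)) ((k ^ 2) ^ 2))) :
    symbol π p b = symbol π p c := by
  rw [mul_comm 2, pow_mul] at hbc
  set M := torsionExponent (Module.finrank ℤ (𝓞 K)) ((k ^ 2) ^ 2)
  obtain ⟨t, ht⟩ := hbc
  have hkt : (k : 𝓞 K) ^ 2 ∣ t := by
    refine (isCoprime_of_dvd_sub_one hb.dvd_sub_one).symm.dvd_of_dvd_mul_left (z := t) ?_
    rw [← ht]
    exact dvd_sub hc.dvd (hb.dvd.mul_right _)
  have hzM : IsCoprime (z ^ M) (p : 𝓞 K) := hz.pow_left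
  calc
    symbol π p b = symbol π p b * symbolRatio π p (z ^ M) := by
      rw [symbolRatio_pow hK hk hπ hp.ne_one hb.dvd_sub_one hz,
        symbolRatio_pow_torsionExponent hK hk h2k hπ hp hpk hz, mul_one]
    _ = symbol π p (b * (z ^ M) ^ 2) :=
      (symbol_mul_sq_eq_mul_symbolRatio hK hk hπ hp.ne_one hzM hb).symm
    _ = symbol π p (b * (z ^ M) ^ 2 + p * t) :=
      (symbol_add_mul_right hπ (hb.mul_sq hzM.symm) hkt).symm
    _ = symbol π p c := by rw [← ht, add_sub_cancel]

-- The elements of `S` are the symbols of rows `(p, b x)` with a common prime `p`, and are separated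
-- by the classes of the `b x` in the units modulo `p` modulo `n`-th powers.
lemma card_le (hK : 1 < Fintype.card (InfinitePlace K)) (hk : 1 ≤ k) (h2k : 2 ∣ k)
    (hπ : (elementary (k : 𝓞 K)).subgroupOf (principal ((k : 𝓞 K) ^ 2)) ≤ π.ker)
    (hsurj : Function.Surjective π) (S : Finset A) :
    S.card ≤ (2 * torsionExponent (Module.finrank ℤ (𝓞 K)) ((k ^ 2) ^ 2)) ^
      Module.finrank ℤ (𝓞 K) := by
  set n := 2 * torsionExponent (Module.finrank ℤ (𝓞 K)) ((k ^ 2) ^ 2)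
  have hk4 : (k ^ 2) ^ 2 ≠ 0 := pow_ne_zero 2 (pow_ne_zero 2 (by omega))
  have hn0 : n ≠ 0 := mul_ne_zero two_ne_zero (torsionExponent_ne_zero hk4)
  obtain ⟨b, B, α, hB, hBk, hα, h⟩ := exists_forall_mem_symbol_eq_of_modEq hk h2k hπ hsurj S
  obtain ⟨p, hpn, hp, hpk, hpB⟩ := exists_prime_gt_modEq hk4 hB (hBk.symm.pow_left 2)
    isCoprime_one_left (Nat.isCoprime_iff_coprime.2 hα) n
  specialize h p hpk hpB
  have hfin := finite_quotient_span_singleton (Nat.cast_ne_zero (R := 𝓞 K).2 hp.ne_zero)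
  set I := Ideal.span {(p : 𝓞 K)} with hI
  let unitClass : S → (𝓞 K ⧸ I)ˣ ⧸ (powMonoidHom n : (𝓞 K ⧸ I)ˣ →* (𝓞 K ⧸ I)ˣ).range :=
    fun x => QuotientGroup.mk (isUnit_mk_span_singleton_iff.2 (h x.1 x.2).1.isCoprime.symm).unit
  have hinj : Function.Injective unitClass := by
    rintro ⟨x, hx⟩ ⟨y, hy⟩ hxy
    obtain ⟨hrowx, hsymbolx⟩ := h x hx
    obtain ⟨hrowy, hsymboly⟩ := h y hy
    obtain ⟨w, hw⟩ := QuotientGroup.eq.1 hxy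
    obtain ⟨z, hz⟩ := Ideal.Quotient.mk_surjective (w : 𝓞 K ⧸ I)
    have hzp : IsCoprime z (p : 𝓞 K) := isUnit_mk_span_singleton_iff.1 (hz ▸ w.isUnit)
    have hmk : Ideal.Quotient.mk I (b y) = Ideal.Quotient.mk I (b x * z ^ n) := by
      rw [map_mul, map_pow, hz]
      exact (congrArg Units.val (eq_inv_mul_iff_mul_eq.1 hw)).symm
    rw [Ideal.Quotient.eq, hI, Ideal.mem_span_singleton] at hmk
    exact Subtype.ext (hsymbolx.symm.trans
      ((symbol_eq_of_dvd_sub_mul_pow hK hk h2k hπ hp hpk hrowx hrowy hzp hmk).trans hsymboly))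
  calc
    S.card = Nat.card S := by simp
    _ ≤ (powMonoidHom n : (𝓞 K ⧸ I)ˣ →* (𝓞 K ⧸ I)ˣ).range.index :=
      Nat.card_le_card_of_injective unitClass hinj
    _ = Nat.card (rootsOfUnity n (𝓞 K ⧸ I)) := index_range_powMonoidHom_units n
    _ ≤ n ^ Module.finrank ℤ (𝓞 K) := card_rootsOfUnity_le hp hn0 hpn

lemma elementary_subgroupOf_principal_normal (hK : 1 < Fintype.card (InfinitePlace K))
    (hk : 1 ≤ k) : ((elementary (k : 𝓞 K)).subgroupOf (principal ((k : 𝓞 K) ^ 2))).Normal := by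
  refine ⟨fun e he γ => ?_⟩
  have h := principal_conj_mem_elementary hK hk (inv_mem γ.2) he
  rwa [inv_inv] at h

lemma elementary_relIndex_principal_ne_zero (hK : 1 < Fintype.card (InfinitePlace K))
    (hk : 1 ≤ k) (h2k : 2 ∣ k) :
    (elementary (k : 𝓞 K)).relIndex (principal ((k : 𝓞 K) ^ 2)) ≠ 0 := by
  set H := (elementary (k : 𝓞 K)).subgroupOf (principal ((k : 𝓞 K) ^ 2))
  have hnormal : H.Normal := elementary_subgroupOf_principal_normal hK hk
  let _ : CommGroup (principal ((k : 𝓞 K) ^ 2) ⧸ H) :=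
    { QuotientGroup.Quotient.group H with
      mul_comm := by
        rintro ⟨γ⟩ ⟨δ⟩
        refine QuotientGroup.eq.2 ?_
        have e : (γ * δ)⁻¹ * (δ * γ) = δ⁻¹ * γ⁻¹ * δ * γ⁻¹⁻¹ := by group
        exact e ▸ principal_commutator_mem_elementary hK hk δ.2 (inv_mem γ.2) }
  have := fintypeOfFinsetCardLe _ (card_le hK hk h2k (π := QuotientGroup.mk' H)
    (QuotientGroup.ker_mk' H).ge (QuotientGroup.mk'_surjective H))
  exact (Subgroup.finiteIndex_of_finite_quotient (H := H)).index_ne_zero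

lemma principal_finiteIndex {q : 𝓞 K} (hq : q ≠ 0) : (principal q).FiniteIndex := by
  have := finite_quotient_span_singleton hq
  exact inferInstanceAs (MonoidHom.ker _).FiniteIndex

lemma elementary_finiteIndex (hK : 1 < Fintype.card (InfinitePlace K)) (hk : 1 ≤ k) (h2k : 2 ∣ k) :
    (elementary (k : 𝓞 K)).FiniteIndex := by
  have hk0 : (k : 𝓞 K) ≠ 0 := Nat.cast_ne_zero.2 (by omega)
  refine ⟨?_⟩
  rw [← Subgroup.relIndex_top_right]
  refine Subgroup.relIndex_ne_zero_trans (elementary_relIndex_principal_ne_zero hK hk h2k) ?_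
  rw [Subgroup.relIndex_top_right]
  exact (principal_finiteIndex (pow_ne_zero 2 hk0)).index_ne_zero

end NumberField

end UnipotentSL2

open UnipotentSL2 in
/-- For a number field `K` which is neither `ℚ` nor imaginary quadratic
(equivalently, `K` has at least two archimedean places) and an integer `k ≥ 1`, the
subgroup of `SL_2(O_K)` generated by the elementary matrices `(1, b; 0, 1)` and
`(1, 0; c, 1)` with `b, c ∈ k·O_K` has finite index in `SL_2(O_K)`. -/
theorem unipotent_generators_sl_two_ring_of_integers
    (K : Type*) [Field K] [NumberField K]
    (hK : 1 < Fintype.card (InfinitePlace K)) (k : ℕ) (hk : 1 ≤ k) :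
    (Subgroup.closure
      ({g : Matrix.SpecialLinearGroup (Fin 2) (𝓞 K) |
          ∃ b : 𝓞 K, (k : 𝓞 K) ∣ b ∧ g.1 = !![1, b; 0, 1]} ∪
       {g : Matrix.SpecialLinearGroup (Fin 2) (𝓞 K) |
          ∃ c : 𝓞 K, (k : 𝓞 K) ∣ c ∧ g.1 = !![1, 0; c, 1]})).FiniteIndex := by
  have heven : (elementary ((2 * k : ℕ) : 𝓞 K)).FiniteIndex :=
    elementary_finiteIndex hK (by omega) (dvd_mul_right 2 k)
  have hle : elementary ((2 * k : ℕ) : 𝓞 K) ≤ elementary (k : 𝓞 K) :=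
    elementary_anti (Nat.cast_dvd_cast (dvd_mul_left k 2))
  exact Subgroup.finiteIndex_of_le hle
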